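/- arXiv:1902.05195 — 9 statements merged into one kernel-verified Lean document; each statement's English description precedes it below -/
import Mathlib

section
/- Let p ≥ 5 be a prime and let A be a nonempty subset of 𝔽_p with A = −A and with |A \ {0}| ≤ 2·log₃(p). Then A has a unique difference, i.e., there exists x ∈ 𝔽_p such that exactly one ordered pair (a,b) ∈ A × A satisfies a − b = x. -/
open Finset Pointwise

/-- A nonempty subset `A` of `𝔽_p` has a unique difference if there is `x ∈ 𝔽_p`
represented exactly once as an ordered difference `a - b` with `a, b ∈ A`. -/
def HasUniqueDifference {p : ℕ} (A : Finset (ZMod p)) : Prop :=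
  ∃ x : ZMod p, ((A ×ˢ A).filter fun ab => ab.1 - ab.2 = x).card = 1

/-!
Let `A` be symmetric without a unique difference. Then every `a ∈ A` is a midpoint `2 * a = b + d`
of two elements of `A` other than `a`, since the difference `a - (-a)` is not unique.

Split the nonzero elements of `A`, up to sign, into maximal chains `u, 3 * u, …, 3 ^ K * u`, and
write the midpoint relation at the top of every chain as a linear equation in the first elements
`u`. Hadamard's inequality bounds the determinant of this system strictly by `3` to the total length
of the chains, which is at most `p` by assumption. The system is singular mod `p`, hence over `ℤ`.
At an index where `3 ^ K * |x|` is maximal in an integer solution `x`, both terms on the right must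
be as large as the left-hand side, so the signs of `x` at such indices pick out a set of midpoints
with at most one element per chain. The same argument with `K = 0`, after translating a point to
`0`, then replaces such a set by a strictly smaller nonempty one, which cannot go on forever.
-/

open scoped Matrix

section Determinants

variable {ι : Type*} [Fintype ι] [DecidableEq ι]

lemma abs_det_le_prod_norm_row {n : ℕ} (B : Matrix (Fin n) (Fin n) ℝ) :
    |B.det| ≤ ∏ i, ‖WithLp.toLp 2 (B i)‖ := by
  let e := EuclideanSpace.basisFun (Fin n) ℝ
  have hfinrank : Fact (Module.finrank ℝ (EuclideanSpace ℝ (Fin n)) = n) := ⟨by simp⟩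
  have hdet : e.toBasis.det (fun i => WithLp.toLp 2 (B i)) = B.det := by
    rw [Module.Basis.det_apply, ← Matrix.det_transpose]
    rfl
  rw [← hdet, ← e.toBasis.orientation.volumeForm_robust' e]
  exact e.toBasis.orientation.abs_volumeForm_apply_le _

lemma det_sq_le_prod_sum_sq (B : Matrix ι ι ℝ) : B.det ^ 2 ≤ ∏ i, ∑ j, B i j ^ 2 := by
  let e := (Fintype.equivFin ι).symm
  have h := pow_le_pow_left₀ (abs_nonneg _) (abs_det_le_prod_norm_row (B.submatrix e e)) 2
  simp only [sq_abs, Matrix.det_submatrix_equiv_self, ← prod_pow, EuclideanSpace.real_norm_sq_eq,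
    Matrix.submatrix_apply] at h
  have hrow : ∀ i, ∑ j, B (e i) (e j) ^ 2 = ∑ j, B (e i) j ^ 2 := fun i =>
    e.sum_comp fun j => B (e i) j ^ 2
  simpa only [hrow, e.prod_comp fun i => ∑ j, B i j ^ 2] using h

lemma sum_sq_single_sub_single_sub_single_le {i j k : ι} {α γ : ℝ} (hα : |α| ≤ 1) (hγ : |γ| ≤ 1)
    (hji : j = i → |α| ≤ 1 / 3) (hki : k = i → |γ| ≤ 1 / 3) :
    ∑ l, (Pi.single i 2 - Pi.single j α - Pi.single k γ : ι → ℝ) l ^ 2 ≤ 8 := by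
  have expand : ∑ l, (Pi.single i 2 - Pi.single j α - Pi.single k γ : ι → ℝ) l ^ 2 =
      4 + α ^ 2 + γ ^ 2 - (if j = i then 4 * α else 0) - (if k = i then 4 * γ else 0) +
        (if j = k then 2 * (α * γ) else 0) := by
    calc _ = (Pi.single i 2 - Pi.single j α - Pi.single k γ : ι → ℝ) ⬝ᵥ
          (Pi.single i 2 - Pi.single j α - Pi.single k γ) := by simp only [dotProduct, sq]
      _ = _ := by
        simp only [sub_dotProduct, dotProduct_sub, single_dotProduct, Pi.single_apply]
        grind
  rw [expand]
  rw [abs_le] at hα hγ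
  by_cases hj : j = i
  · have hα' := abs_le.1 (hji hj)
    by_cases hk : k = i
    · have hγ' := abs_le.1 (hki hk)
      rw [if_pos hj, if_pos hk, if_pos (hj.trans hk.symm)]
      nlinarith
    · rw [if_pos hj, if_neg hk, if_neg (by grind)]
      nlinarith
  · by_cases hk : k = i
    · have hγ' := abs_le.1 (hki hk)
      rw [if_neg hj, if_pos hk, if_neg (by grind)]
      nlinarith
    · rw [if_neg hj, if_neg hk]
      split_ifs <;> nlinarith

lemma det_eq_zero_of_zmod_mulVec_eq_zero {p : ℕ} [Fact p.Prime] {M : Matrix ι ι ℤ}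
    (hM : |M.det| < p) {v : ι → ZMod p} (hv : v ≠ 0)
    (hMv : M.map (Int.castRingHom (ZMod p)) *ᵥ v = 0) : M.det = 0 := by
  have hdet : (M.map (Int.castRingHom (ZMod p))).det = 0 :=
    Matrix.exists_mulVec_eq_zero_iff.1 ⟨v, hv, hMv⟩
  rw [← RingHom.mapMatrix_apply, ← RingHom.map_det, eq_intCast,
    ZMod.intCast_zmod_eq_zero_iff_dvd] at hdet
  exact Int.eq_zero_of_abs_lt_dvd hdet hM

end Determinants

lemma eq_of_two_mul_eq_add_of_abs_le {R : Type*} [CommRing R] [LinearOrder R]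
    [IsStrictOrderedRing R] {x y z : R} (h : 2 * z = x + y) (hx : |x| ≤ |z|) (hy : |y| ≤ |z|) :
    x = z ∧ y = z := by
  rw [abs_le] at hx hy
  rcases abs_choice z with hz | hz <;> rw [hz] at hx hy <;> constructor <;> linarith

lemma mul_sign_eq_of_abs_mul_le {R : Type*} [CommRing R] [LinearOrder R] [IsStrictOrderedRing R]
    {c m x y : R} (hm : 0 < m) (hc : |c| ≤ m) (hcx : c * x = y) (hy : y ≠ 0) (hle : |m * x| ≤ |y|) :
    c * (SignType.sign x : R) = m * (SignType.sign y : R) ∧ |m * x| = |y| := by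
  have hx : x ≠ 0 := by
    rintro rfl
    exact hy (by simpa using hcx.symm)
  have habs : |c| = m := by
    refine hc.antisymm (le_of_mul_le_mul_right ?_ (abs_pos.2 hx))
    rwa [← abs_mul, hcx, ← abs_of_pos hm, ← abs_mul]
  constructor
  · have hsign : SignType.sign (m * x) = SignType.sign x := by
      rw [sign_mul, sign_pos hm, one_mul]
    rcases (abs_eq hm.le).1 habs with rfl | rfl
    · rw [← hcx, hsign]
    · rw [← hcx, neg_mul m x, Left.sign_neg, hsign, SignType.coe_neg, neg_mul_comm]
  · rw [abs_mul, abs_of_pos hm, ← habs, ← abs_mul, hcx]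

/-- The homogeneous linear system `2 * 3 ^ h i * x i = a i * x (l i) + b i * x (r i)`, one equation
for each unknown, where `h` is `height`, `l` and `r` are `left` and `right`, and `a` and `b` are
their coefficients. The bounds say that in the unknowns `3 ^ h i * x i` the coefficients on the
right have absolute value at most `1`, and at most `1 / 3` if they multiply the unknown on the left.
-/
structure DoublingSystem (ι : Type*) where
  height : ι → ℕ
  left : ι → ι
  right : ι → ι
  leftCoeff : ι → ℤ
  rightCoeff : ι → ℤ
  abs_leftCoeff_le : ∀ i, |leftCoeff i| ≤ 3 ^ height (left i)
  abs_rightCoeff_le : ∀ i, |rightCoeff i| ≤ 3 ^ height (right i)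
  three_mul_abs_leftCoeff_le : ∀ i, left i = i → 3 * |leftCoeff i| ≤ 3 ^ height i
  three_mul_abs_rightCoeff_le : ∀ i, right i = i → 3 * |rightCoeff i| ≤ 3 ^ height i

namespace DoublingSystem

variable {ι : Type*} (D : DoublingSystem ι)

/-- `x` solves every equation of the system. -/
def IsSolution {R : Type*} [CommRing R] (x : ι → R) : Prop :=
  ∀ i, 2 * 3 ^ D.height i * x i =
    D.leftCoeff i * x (D.left i) + D.rightCoeff i * x (D.right i)

section Matrix

variable [DecidableEq ι]

/-- The coefficient matrix of the system. -/
def matrix : Matrix ι ι ℤ := fun i =>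
  Pi.single i (2 * 3 ^ D.height i) - Pi.single (D.left i) (D.leftCoeff i) -
    Pi.single (D.right i) (D.rightCoeff i)

/-- The coefficient matrix of the system in the unknowns `3 ^ height i * x i`. -/
noncomputable def scaledMatrix : Matrix ι ι ℝ := fun i =>
  Pi.single i 2 - Pi.single (D.left i) (D.leftCoeff i / 3 ^ D.height (D.left i) : ℝ) -
    Pi.single (D.right i) (D.rightCoeff i / 3 ^ D.height (D.right i) : ℝ)

variable [Fintype ι]

lemma map_matrix_mulVec_eq_zero_iff {R : Type*} [CommRing R] {x : ι → R} :
    D.matrix.map (Int.castRingHom R) *ᵥ x = 0 ↔ D.IsSolution x := by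
  have hrow : ∀ i, (D.matrix.map (Int.castRingHom R) *ᵥ x) i = 2 * 3 ^ D.height i * x i -
      (D.leftCoeff i * x (D.left i) + D.rightCoeff i * x (D.right i)) := by
    intro i
    simp [Matrix.mulVec, dotProduct, matrix, sub_mul, Pi.single_apply, sum_sub_distrib,
      apply_ite (Int.cast : ℤ → R), ← sub_sub]
  simp only [funext_iff, hrow, Pi.zero_apply, sub_eq_zero, IsSolution]

lemma map_matrix_eq_scaledMatrix_mul_diagonal :
    D.matrix.map (Int.castRingHom ℝ) =
      D.scaledMatrix * Matrix.diagonal fun j => 3 ^ D.height j := by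
  ext i j
  simp only [matrix, scaledMatrix, Matrix.map_apply, Matrix.mul_diagonal, Pi.sub_apply,
    Pi.single_apply, map_sub, sub_mul]
  congr 1
  · congr 1 <;> split_ifs with h <;> simp [h]
  · split_ifs with h <;> simp [h]

lemma sum_sq_scaledMatrix_le (i : ι) : ∑ j, D.scaledMatrix i j ^ 2 ≤ 8 := by
  have hle_one : ∀ {c : ℤ} {n : ℕ}, |c| ≤ 3 ^ n → |(c / 3 ^ n : ℝ)| ≤ 1 := by
    intro c n h
    rw [abs_div, abs_of_pos (by positivity : (0 : ℝ) < 3 ^ n), div_le_one (by positivity)]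
    exact_mod_cast h
  have hle_third : ∀ {c : ℤ} {n : ℕ}, 3 * |c| ≤ 3 ^ n → |(c / 3 ^ n : ℝ)| ≤ 1 / 3 := by
    intro c n h
    rw [abs_div, abs_of_pos (by positivity : (0 : ℝ) < 3 ^ n),
      div_le_div_iff₀ (by positivity) (by norm_num), mul_comm, one_mul]
    exact_mod_cast h
  refine sum_sq_single_sub_single_sub_single_le (hle_one (D.abs_leftCoeff_le i))
    (hle_one (D.abs_rightCoeff_le i)) (fun h => hle_third ?_) (fun h => hle_third ?_)
  · rw [h]
    exact D.three_mul_abs_leftCoeff_le i h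
  · rw [h]
    exact D.three_mul_abs_rightCoeff_le i h

lemma abs_det_scaledMatrix_lt [Nonempty ι] : |D.scaledMatrix.det| < 3 ^ Fintype.card ι := by
  refine abs_lt_of_sq_lt_sq ?_ (by positivity)
  calc D.scaledMatrix.det ^ 2 ≤ ∏ i, ∑ j, D.scaledMatrix i j ^ 2 := det_sq_le_prod_sum_sq _
    _ ≤ ∏ _i : ι, 8 :=
      prod_le_prod (fun _ _ => by positivity) fun i _ => D.sum_sq_scaledMatrix_le i
    _ = 8 ^ Fintype.card ι := by simp
    _ < 9 ^ Fintype.card ι := pow_lt_pow_left₀ (by norm_num) (by norm_num) Fintype.card_ne_zero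
    _ = (3 ^ Fintype.card ι) ^ 2 := by rw [← pow_mul, mul_comm, pow_mul]; norm_num

lemma abs_det_matrix_lt [Nonempty ι] : |D.matrix.det| < 3 ^ ∑ i, (D.height i + 1) := by
  have hdet : (D.matrix.det : ℝ) = D.scaledMatrix.det * 3 ^ ∑ i, D.height i := by
    rw [← eq_intCast (Int.castRingHom ℝ), RingHom.map_det, RingHom.mapMatrix_apply,
      map_matrix_eq_scaledMatrix_mul_diagonal, Matrix.det_mul, Matrix.det_diagonal,
      prod_pow_eq_pow_sum]
  have hlt : |(D.matrix.det : ℝ)| < 3 ^ ∑ i, (D.height i + 1) := by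
    rw [hdet, abs_mul, abs_of_pos (by positivity : (0 : ℝ) < 3 ^ ∑ i, D.height i), sum_add_distrib,
      pow_add, mul_comm, Fintype.card_eq_sum_ones.symm]
    gcongr
    exact D.abs_det_scaledMatrix_lt
  exact_mod_cast hlt

end Matrix

lemma exists_int_solution [Fintype ι] {p : ℕ} [Fact p.Prime] (hp : 3 ^ ∑ i, (D.height i + 1) ≤ p)
    {v : ι → ZMod p} (hv : v ≠ 0) (hsol : D.IsSolution v) :
    ∃ x : ι → ℤ, x ≠ 0 ∧ D.IsSolution x := by
  classical
  obtain ⟨i, -⟩ := Function.ne_iff.1 hv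
  have : Nonempty ι := ⟨i⟩
  have hlt : |D.matrix.det| < p := D.abs_det_matrix_lt.trans_le (by exact_mod_cast hp)
  obtain ⟨x, hx, hMx⟩ := Matrix.exists_mulVec_eq_zero_iff.2
    (det_eq_zero_of_zmod_mulVec_eq_zero hlt hv (D.map_matrix_mulVec_eq_zero_iff.2 hsol))
  exact ⟨x, hx, D.map_matrix_mulVec_eq_zero_iff.1 (by simpa using hMx)⟩

lemma terms_eq_of_abs_max {x : ι → ℤ} (hsol : D.IsSolution x) {i : ι}
    (hmax : ∀ j, |3 ^ D.height j * x j| ≤ |3 ^ D.height i * x i|) :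
    D.leftCoeff i * x (D.left i) = 3 ^ D.height i * x i ∧
      D.rightCoeff i * x (D.right i) = 3 ^ D.height i * x i := by
  have hterm : ∀ {c : ℤ} {j : ι}, |c| ≤ 3 ^ D.height j → |c * x j| ≤ |3 ^ D.height i * x i| := by
    intro c j hc
    refine le_trans ?_ (hmax j)
    rw [abs_mul, abs_mul, abs_of_pos (by positivity : (0 : ℤ) < 3 ^ D.height j)]
    gcongr
  exact eq_of_two_mul_eq_add_of_abs_le (by simpa [IsSolution, mul_assoc] using hsol i)
    (hterm (D.abs_leftCoeff_le i)) (hterm (D.abs_rightCoeff_le i))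

lemma exists_sign_solution [Finite ι] {x : ι → ℤ} (hx : x ≠ 0) (hsol : D.IsSolution x) :
    ∃ ε : ι → SignType, ε ≠ 0 ∧ ∀ i, ε i ≠ 0 →
      (D.leftCoeff i * ε (D.left i) : ℤ) = 3 ^ D.height (D.left i) * ε i ∧
      (D.rightCoeff i * ε (D.right i) : ℤ) = 3 ^ D.height (D.right i) * ε i := by
  obtain ⟨j, hj⟩ := Function.ne_iff.1 hx
  have : Nonempty ι := ⟨j⟩
  let y : ι → ℤ := fun i => 3 ^ D.height i * x i
  have hsign : ∀ i, SignType.sign (y i) = SignType.sign (x i) := fun i => by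
    rw [sign_mul, sign_pos (by positivity), one_mul]
  obtain ⟨m, hmax⟩ := Finite.exists_max fun i => |y i|
  have hpos : 0 < |y m| := (abs_pos.2 (mul_ne_zero (by positivity) hj)).trans_le (hmax j)
  let ε : ι → SignType := fun i => if |y i| = |y m| then SignType.sign (x i) else 0
  have hε : ∀ {i}, |y i| = |y m| → ε i = SignType.sign (x i) := fun hi => if_pos hi
  refine ⟨ε, Function.ne_iff.2 ⟨m, ?_⟩, fun i hi => ?_⟩
  · rw [hε rfl, ← hsign, Pi.zero_apply, sign_ne_zero]
    exact abs_pos.1 hpos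
  have hi : |y i| = |y m| := by
    by_contra h
    exact hi (if_neg h)
  have hmax' : ∀ j, |y j| ≤ |y i| := fun j => hi ▸ hmax j
  have hterm : ∀ {c : ℤ} {j : ι}, |c| ≤ 3 ^ D.height j → c * x j = y i →
      (c * ε j : ℤ) = 3 ^ D.height j * ε i := by
    intro c j hc hcx
    obtain ⟨hcε, hj⟩ := mul_sign_eq_of_abs_mul_le (by positivity) hc hcx
      (abs_pos.1 (hi ▸ hpos)) (hmax' j)
    rw [hε (hj.trans hi), hε hi, hcε, hsign]
  obtain ⟨hl, hr⟩ := D.terms_eq_of_abs_max hsol hmax'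
  exact ⟨hterm (D.abs_leftCoeff_le i) hl, hterm (D.abs_rightCoeff_le i) hr⟩

end DoublingSystem

lemma signType_cast_mul_self_of_ne_zero {R : Type*} [Ring R] {s : SignType} (hs : s ≠ 0) :
    (s * s : R) = 1 := by
  cases s <;> simp at hs ⊢

/-- Every element `a` of `S` is the midpoint of two elements of `S`, the first of which is not `a`.
A symmetric set without a unique difference has this property. -/
def IsBalanced {G : Type*} [Add G] (S : Finset G) : Prop :=
  ∀ a ∈ S, ∃ b ∈ S, ∃ d ∈ S, b ≠ a ∧ b + d = a + a

/-- `x` is an integer multiple `c * v j` with `|c| ≤ 3 ^ h j`, and even with `3 * |c| ≤ 3 ^ h j` if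
`j = i`. This is what the `i`-th equation of a doubling system requires of its terms. -/
def IsSmallMultiple {ι R : Type*} [Ring R] (h : ι → ℕ) (v : ι → R) (i : ι) (x : R) : Prop :=
  ∃ (j : ι) (c : ℤ), |c| ≤ 3 ^ h j ∧ (j = i → 3 * |c| ≤ 3 ^ h i) ∧ c * v j = x

section Balanced

variable {p : ℕ} [Fact p.Prime]

lemma DoublingSystem.exists_isBalanced_card_le {ι : Type*} [Fintype ι] (D : DoublingSystem ι)
    (hp : 3 ^ ∑ i, (D.height i + 1) ≤ p) {v : ι → ZMod p} (hv : v ≠ 0) (hsol : D.IsSolution v)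
    (hne : ∀ i, D.leftCoeff i * v (D.left i) ≠ 3 ^ D.height i * v i) :
    ∃ T : Finset (ZMod p), T.Nonempty ∧ IsBalanced T ∧ #T ≤ Fintype.card ι := by
  obtain ⟨x, hx, hxsol⟩ := D.exists_int_solution hp hv hsol
  obtain ⟨ε, hε, hterm⟩ := D.exists_sign_solution hx hxsol
  obtain ⟨m, hm⟩ := Function.ne_iff.1 hε
  let t : ι → ZMod p := fun i => ε i * (3 ^ D.height i * v i)
  have hsq : ∀ {s : SignType}, s ≠ 0 → (s * s : ZMod p) = 1 := signType_cast_mul_self_of_ne_zero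
  have hmem : ∀ {i j : ι} {c : ℤ}, ε i ≠ 0 → (c * ε j : ℤ) = 3 ^ D.height j * ε i →
      ε i * (c * v j) ∈ ({i | ε i ≠ 0} : Finset ι).image t := by
    intro i j c hi hc
    have hj : ε j ≠ 0 := by
      intro hj
      rw [hj, SignType.coe_zero, mul_zero, zero_eq_mul] at hc
      exact hc.elim (by positivity)
        (left_ne_zero_of_mul_eq_one (signType_cast_mul_self_of_ne_zero hi))
    have hc' : (c * ε j : ZMod p) = 3 ^ D.height j * ε i := by
      simpa using congrArg (Int.cast : ℤ → ZMod p) hc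
    refine mem_image.2 ⟨j, by simpa using hj, ?_⟩
    linear_combination (-ε i * ε j * v j : ZMod p) * hc' +
      (ε i * c * v j : ZMod p) * hsq hj -
      (ε j * 3 ^ D.height j * v j : ZMod p) * hsq hi
  refine ⟨({i | ε i ≠ 0} : Finset ι).image t, ⟨t m, mem_image_of_mem t (by simpa using hm)⟩,
    fun a ha => ?_, card_image_le.trans (card_filter_le _ _)⟩
  obtain ⟨i, hi, rfl⟩ := mem_image.1 ha
  replace hi : ε i ≠ 0 := by simpa using hi
  refine ⟨_, hmem hi (hterm i hi).1, _, hmem hi (hterm i hi).2, fun h => hne i ?_, ?_⟩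
  · exact mul_left_cancel₀ (left_ne_zero_of_mul_eq_one (hsq hi)) h
  · linear_combination (-ε i : ZMod p) * hsol i

lemma exists_isBalanced_card_le {ι : Type*} [Fintype ι] {h : ι → ℕ}
    (hp : 3 ^ ∑ i, (h i + 1) ≤ p) {v : ι → ZMod p} (hv : v ≠ 0)
    (hsplit : ∀ i, ∃ b d, IsSmallMultiple h v i b ∧ IsSmallMultiple h v i d ∧
      b ≠ 3 ^ h i * v i ∧ b + d = 3 ^ h i * v i + 3 ^ h i * v i) :
    ∃ T : Finset (ZMod p), T.Nonempty ∧ IsBalanced T ∧ #T ≤ Fintype.card ι := by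
  choose b d hb hd hne hsum using hsplit
  choose l cl hcl hcl_self hl using hb
  choose r cr hcr hcr_self hr using hd
  let D : DoublingSystem ι :=
    { height := h
      left := l
      right := r
      leftCoeff := cl
      rightCoeff := cr
      abs_leftCoeff_le := hcl
      abs_rightCoeff_le := hcr
      three_mul_abs_leftCoeff_le := hcl_self
      three_mul_abs_rightCoeff_le := hcr_self }
  refine D.exists_isBalanced_card_le hp hv (fun i => ?_) fun i => ?_
  · simp only [D, hl, hr, hsum]
    ring
  · simpa only [D, hl] using hne i

-- After translating `s` to `0`, the set is described by the `#S - 1` unknowns `x - s`.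
lemma IsBalanced.exists_card_lt {S : Finset (ZMod p)} (hS : IsBalanced S) (hne : S.Nonempty)
    (hp : 3 ^ #S ≤ p) : ∃ T : Finset (ZMod p), T.Nonempty ∧ IsBalanced T ∧ #T < #S := by
  obtain ⟨s, hs⟩ := hne
  let v : S.erase s → ZMod p := fun x => x - s
  have hv : v ≠ 0 := by
    obtain ⟨b, hb, -, -, hbs, -⟩ := hS s hs
    exact Function.ne_iff.2 ⟨⟨b, mem_erase.2 ⟨hbs, hb⟩⟩, sub_ne_zero.2 hbs⟩
  have hsmall : ∀ {i : S.erase s} {x : ZMod p}, x ∈ S → x ≠ i →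
      IsSmallMultiple 0 v i (x - s) := by
    intro i x hx hxi
    by_cases hxs : x = s
    · exact ⟨i, 0, by simp [hxs]⟩
    · exact ⟨⟨x, mem_erase.2 ⟨hxs, hx⟩⟩, 1, by simp, fun h => absurd (congrArg Subtype.val h) hxi,
        by simp [v]⟩
  have hsplit : ∀ i, ∃ b d, IsSmallMultiple 0 v i b ∧ IsSmallMultiple 0 v i d ∧
      b ≠ v i ∧ b + d = v i + v i := by
    intro i
    obtain ⟨b, hb, d, hd, hbi, hsum⟩ := hS i (mem_of_mem_erase i.2)
    have hdi : d ≠ i := by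
      rintro rfl
      exact hbi (add_right_cancel hsum)
    exact ⟨b - s, d - s, hsmall hb hbi, hsmall hd hdi, by simpa [v] using hbi,
      by linear_combination hsum⟩
  have hlt : #(S.erase s) < #S := card_erase_lt_of_mem hs
  have hp' : 3 ^ ∑ i, ((0 : S.erase s → ℕ) i + 1) ≤ p := by
    simpa using (Nat.pow_le_pow_right three_pos hlt.le).trans hp
  obtain ⟨T, hT, hbal, hcard⟩ := exists_isBalanced_card_le hp' hv (by simpa using hsplit)
  exact ⟨T, hT, hbal, hcard.trans_lt (by rwa [Fintype.card_coe])⟩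

lemma IsBalanced.lt_three_pow_card {S : Finset (ZMod p)} (hS : IsBalanced S) (hne : S.Nonempty) :
    p < 3 ^ #S := by
  induction h : #S using Nat.strong_induction_on generalizing S with
  | _ n ih =>
    subst h
    by_contra! hp
    obtain ⟨T, hT, hbal, hcard⟩ := hS.exists_card_lt hne hp
    have hlt := ih _ hcard hbal hT rfl
    have hle : 3 ^ #T ≤ 3 ^ #S := Nat.pow_le_pow_right three_pos hcard.le
    lia

end Balanced

lemma neg_mem_iff_of_eq_neg {G : Type*} [InvolutiveNeg G] [DecidableEq G] {A : Finset G}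
    (hA : A = -A) {a : G} : -a ∈ A ↔ a ∈ A := by
  rw [← mem_neg', ← hA]

lemma two_mul_card_le_card_of_neg {α G : Type*} [InvolutiveNeg G] {s : Finset α}
    {B : Finset G} {g : α → G} (hmem : ∀ x ∈ s, g x ∈ B) (hneg : ∀ x ∈ s, -g x ∈ B)
    (hinj : Set.InjOn g s) (hne : ∀ x ∈ s, ∀ y ∈ s, g x ≠ -g y) : 2 * #s ≤ #B := by
  classical
  have hdisj : Disjoint (s.image g) (s.image (Neg.neg ∘ g)) := by
    rw [disjoint_left]
    simp only [mem_image]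
    rintro _ ⟨x, hx, rfl⟩ ⟨y, hy, hxy⟩
    exact hne x hx y hy hxy.symm
  calc 2 * #s = #(s.image g) + #(s.image (Neg.neg ∘ g)) := by
        rw [card_image_of_injOn hinj, card_image_of_injOn (neg_injective.comp_injOn hinj), two_mul]
    _ = #(s.image g ∪ s.image (Neg.neg ∘ g)) := (card_union_of_disjoint hdisj).symm
    _ ≤ #B := card_le_card (union_subset (image_subset_iff.2 hmem) (image_subset_iff.2 hneg))

lemma exists_pow_mul_mem_and_notMem {M : Type*} [Monoid M] {A : Finset M} {r a : M} (ha : a ∈ A)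
    (hexit : ∃ n, r ^ n * a ∉ A) : ∃ K, (∀ k ≤ K, r ^ k * a ∈ A) ∧ r ^ (K + 1) * a ∉ A := by
  classical
  obtain ⟨K, hK⟩ : ∃ K, Nat.find hexit = K + 1 := by
    refine Nat.exists_eq_succ_of_ne_zero fun h => ?_
    exact (Nat.find_eq_zero hexit).1 h (by simpa using ha)
  exact ⟨K, fun k hk => not_not.1 (Nat.find_min hexit (by lia)), hK ▸ Nat.find_spec hexit⟩

lemma exists_pow_mul_notMem {F : Type*} [Field F] [DecidableEq F] (hF : ringChar F ≠ 2)
    {A : Finset F} (hA : A = -A) {r a : F} (hr : r ≠ 0) (ha : a ≠ 0)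
    (hcard : #(A.erase 0) < 2 * orderOf (r ^ 2)) : ∃ n, r ^ n * a ∉ A := by
  by_contra! hmem
  have hne : ∀ n, r ^ n * a ≠ 0 := fun n => mul_ne_zero (pow_ne_zero n hr) ha
  have hinj : ∀ i ∈ range (orderOf (r ^ 2)), ∀ j ∈ range (orderOf (r ^ 2)),
      (r ^ i * a) ^ 2 = (r ^ j * a) ^ 2 → i = j := by
    intro i hi j hj h
    refine pow_injOn_Iio_orderOf (mem_range.1 hi) (mem_range.1 hj)
      (mul_right_cancel₀ (pow_ne_zero 2 ha) ?_)
    simpa only [mul_pow, pow_right_comm] using h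
  have hle : 2 * #(range (orderOf (r ^ 2))) ≤ #(A.erase 0) := by
    refine two_mul_card_le_card_of_neg (g := fun n => r ^ n * a)
      (fun n _ => mem_erase.2 ⟨hne n, hmem n⟩)
      (fun n _ => mem_erase.2 ⟨neg_ne_zero.2 (hne n), (neg_mem_iff_of_eq_neg hA).2 (hmem n)⟩)
      (fun i hi j hj h => hinj i hi j hj (congrArg (· ^ 2) h)) fun i hi j hj h => ?_
    obtain rfl := hinj i hi j hj (by rw [h, neg_sq])
    exact hne i ((Ring.eq_self_iff_eq_zero_of_char_ne_two hF).1 h.symm)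
  rw [card_range] at hle
  lia

lemma orderOf_inv_of_divisionMonoid {G : Type*} [DivisionMonoid G] (x : G) :
    orderOf x⁻¹ = orderOf x := by
  simp [orderOf_eq_orderOf_iff]

-- If `k < l`, dividing by `r ^ (k + 1)` would put `r⁻¹ * u` on the chain of `w`, hence in `A`.
lemma le_of_pow_mul_eq_or_eq_neg {F : Type*} [Field F] [DecidableEq F] {A : Finset F}
    (hA : A = -A) {r u w : F} {k l : ℕ} (hr : r ≠ 0) (hu : r⁻¹ * u ∉ A)
    (hw : ∀ j ≤ l, r ^ j * w ∈ A) (h : r ^ k * u = r ^ l * w ∨ r ^ k * u = -(r ^ l * w)) :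
    l ≤ k := by
  by_contra! hkl
  obtain ⟨m, rfl⟩ := Nat.exists_eq_add_of_lt hkl
  have hmem : r ^ m * w ∈ A := hw m (by lia)
  have hcancel : ∀ {x : F}, r ^ k * u = r ^ (k + m + 1) * x → r⁻¹ * u = r ^ m * x := by
    intro x hx
    rw [inv_mul_eq_iff_eq_mul₀ hr]
    refine mul_left_cancel₀ (pow_ne_zero k hr) (hx.trans ?_)
    ring
  rcases h with h | h
  · exact hu (hcancel h ▸ hmem)
  · rw [← mul_neg] at h
    rw [hcancel h, mul_neg, neg_mem_iff_of_eq_neg hA] at hu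
    exact hu hmem

lemma eq_of_pow_mul_eq_or_eq_neg {F : Type*} [Field F] [DecidableEq F] {A : Finset F}
    (hA : A = -A) {r u w : F} {k l : ℕ} (hr : r ≠ 0) (hu : r⁻¹ * u ∉ A) (hw : r⁻¹ * w ∉ A)
    (huk : ∀ j ≤ k, r ^ j * u ∈ A) (hwl : ∀ j ≤ l, r ^ j * w ∈ A)
    (h : r ^ k * u = r ^ l * w ∨ r ^ k * u = -(r ^ l * w)) : k = l :=
  (le_of_pow_mul_eq_or_eq_neg hA hr hw huk
    (h.imp Eq.symm fun h => (neg_eq_iff_eq_neg.2 h).symm)).antisymm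
    (le_of_pow_mul_eq_or_eq_neg hA hr hu hwl h)

/-- `A` without `0` is, up to sign, partitioned into the chains `u, r * u, …, r ^ K u * u` with
`u ∈ U`, each of which leaves `A` in the next step. Disjointness is recorded by the bound on the
total length. -/
structure IsChainDecomposition {R : Type*} [Ring R] [DecidableEq R] (r : R) (A U : Finset R)
    (K : R → ℕ) : Prop where
  ne_zero : ∀ u ∈ U, u ≠ 0
  pow_mul_mem : ∀ u ∈ U, r ^ K u * u ∈ A
  pow_succ_mul_notMem : ∀ u ∈ U, r ^ (K u + 1) * u ∉ A
  exists_eq_or_eq_neg : ∀ a ∈ A, a ≠ 0 → ∃ u ∈ U, ∃ k ≤ K u, a = r ^ k * u ∨ a = -(r ^ k * u)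
  two_mul_sum_le : 2 * ∑ u ∈ U, (K u + 1) ≤ #(A.erase 0)

/-- The first elements of the maximal chains in `A` under multiplication by `r`, one from each pair
`±u`. The choice between `u` and `-u` by their representatives in `[0, p)` is arbitrary. -/
def chainBottoms {p : ℕ} (r : ZMod p) (A : Finset (ZMod p)) : Finset (ZMod p) :=
  {u ∈ A.erase 0 | r⁻¹ * u ∉ A ∧ u.val < (-u).val}

lemma three_ne_zero_of_five_le {p : ℕ} (hp : 5 ≤ p) : (3 : ZMod p) ≠ 0 := by
  intro h
  have hdvd : p ∣ 3 := (ZMod.natCast_eq_zero_iff 3 p).1 (by exact_mod_cast h)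
  exact absurd (Nat.le_of_dvd three_pos hdvd) (by lia)

section Chains

variable {p : ℕ} [Fact p.Prime]

-- With `3 ^ q = 2 * m + 1` for the order `q` of `9`, the prime `p` divides `m * (m + 1)`.
lemma lt_three_pow_orderOf_three_sq (hp : 5 ≤ p) : p < 3 ^ orderOf ((3 : ZMod p) ^ 2) := by
  have hprime : p.Prime := Fact.out
  set q := orderOf ((3 : ZMod p) ^ 2)
  have hq : 0 < q := by
    refine (isOfFinOrder_iff_pow_eq_one.2 ⟨p - 1, by lia, ?_⟩).orderOf_pos
    rw [pow_right_comm, ZMod.pow_card_sub_one_eq_one (three_ne_zero_of_five_le hp), one_pow]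
  have hone_lt : 1 < 3 ^ q := Nat.one_lt_pow hq.ne' (by norm_num)
  obtain ⟨m, hm⟩ : Odd (3 ^ q) := Odd.pow (by decide)
  have hpow : (2 * m + 1 : ZMod p) ^ 2 = 1 := by
    have hm' : (3 : ZMod p) ^ q = 2 * m + 1 := by
      exact_mod_cast congrArg (Nat.cast : ℕ → ZMod p) hm
    rw [← hm', pow_right_comm, pow_orderOf_eq_one]
  have hdvd : p ∣ 4 * (m * (m + 1)) := by
    rw [← ZMod.natCast_eq_zero_iff]
    push_cast
    linear_combination hpow
  have hle : p ≤ m + 1 := by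
    rcases hprime.dvd_mul.1 hdvd with h | h
    · exact absurd (Nat.le_of_dvd four_pos h) (by lia)
    · rcases hprime.dvd_mul.1 h with h | h
      · exact (Nat.le_of_dvd (by lia) h).trans (Nat.le_succ m)
      · exact Nat.le_of_dvd (by lia) h
  lia

lemma mem_chainBottoms_or_neg_mem (hp2 : p ≠ 2) {A : Finset (ZMod p)} (hA : A = -A) {r u : ZMod p}
    (hu : u ∈ A) (hu0 : u ≠ 0) (hnot : r⁻¹ * u ∉ A) :
    u ∈ chainBottoms r A ∨ -u ∈ chainBottoms r A := by
  have hchar : ringChar (ZMod p) ≠ 2 := by rwa [ZMod.ringChar_zmod_n]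
  have hval : u.val ≠ (-u).val := fun h =>
    hu0 ((Ring.eq_self_iff_eq_zero_of_char_ne_two hchar).1 (ZMod.val_injective p h).symm)
  simp only [chainBottoms, mem_filter, mem_erase, neg_neg, mul_neg, neg_mem_iff_of_eq_neg hA]
  exact hval.lt_or_gt.imp (fun h => ⟨⟨hu0, hu⟩, hnot, h⟩)
    fun h => ⟨⟨neg_ne_zero.2 hu0, hu⟩, hnot, h⟩

lemma exists_mem_chainBottoms (hp2 : p ≠ 2) {A : Finset (ZMod p)} (hA : A = -A) {r a : ZMod p}
    (hr : r ≠ 0) (ha : a ∈ A) (ha0 : a ≠ 0) (hexit : ∃ n, r⁻¹ ^ n * a ∉ A) :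
    ∃ u ∈ chainBottoms r A, ∃ k, (∀ j ≤ k, r ^ j * u ∈ A) ∧ (a = r ^ k * u ∨ a = -(r ^ k * u)) := by
  obtain ⟨k, hmem, hnot⟩ := exists_pow_mul_mem_and_notMem ha hexit
  have hchain : ∀ j ≤ k, r ^ j * (r⁻¹ ^ k * a) ∈ A := by
    intro j hj
    convert hmem (k - j) (Nat.sub_le k j) using 1
    rw [← mul_assoc, ← pow_sub_mul_pow r⁻¹ hj, inv_pow r j]
    field_simp
  have ha_eq : r ^ k * (r⁻¹ ^ k * a) = a := by
    rw [← mul_assoc, ← mul_pow, mul_inv_cancel₀ hr, one_pow, one_mul]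
  have hnot' : r⁻¹ * (r⁻¹ ^ k * a) ∉ A := by rwa [← mul_assoc, ← pow_succ']
  rcases mem_chainBottoms_or_neg_mem hp2 hA (hmem k le_rfl)
    (mul_ne_zero (pow_ne_zero k (inv_ne_zero hr)) ha0) hnot' with hu | hu
  · exact ⟨_, hu, k, hchain, .inl ha_eq.symm⟩
  · refine ⟨_, hu, k, fun j hj => ?_, .inr (by rw [mul_neg, neg_neg, ha_eq])⟩
    rw [mul_neg, neg_mem_iff_of_eq_neg hA]
    exact hchain j hj

lemma two_mul_sum_le_card_of_chains {A : Finset (ZMod p)} (hA : A = -A) {r : ZMod p}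
    (hr : r ≠ 0) {K : ZMod p → ℕ}
    (hK : ∀ u ∈ chainBottoms r A, ∀ k ≤ K u, r ^ k * u ∈ A) :
    2 * ∑ u ∈ chainBottoms r A, (K u + 1) ≤ #(A.erase 0) := by
  have hsign : ∀ u ∈ chainBottoms r A, ∀ w ∈ chainBottoms r A, u ≠ -w := by
    rintro _ hu w hw rfl
    simp only [chainBottoms, mem_filter, neg_neg] at hu hw
    exact hu.2.2.asymm hw.2.2
  let chains : Finset (Σ _ : ZMod p, ℕ) := (chainBottoms r A).sigma fun u => range (K u + 1)
  have hmem : ∀ x ∈ chains, ∀ j ≤ x.2, r ^ j * x.1 ∈ A := fun x hx j hj =>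
    hK _ (mem_sigma.1 hx).1 j (hj.trans (Nat.le_of_lt_succ (mem_range.1 (mem_sigma.1 hx).2)))
  have hne : ∀ x ∈ chains, r ^ x.2 * x.1 ≠ 0 := fun x hx =>
    mul_ne_zero (pow_ne_zero _ hr) (mem_erase.1 (mem_filter.1 (mem_sigma.1 hx).1).1).1
  have hexp : ∀ x ∈ chains, ∀ y ∈ chains, r ^ x.2 * x.1 = r ^ y.2 * y.1 ∨
      r ^ x.2 * x.1 = -(r ^ y.2 * y.1) → x.2 = y.2 := fun x hx y hy =>
    eq_of_pow_mul_eq_or_eq_neg hA hr (mem_filter.1 (mem_sigma.1 hx).1).2.1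
      (mem_filter.1 (mem_sigma.1 hy).1).2.1 (hmem x hx) (hmem y hy)
  calc 2 * ∑ u ∈ chainBottoms r A, (K u + 1) = 2 * #chains := by simp [chains]
    _ ≤ #(A.erase 0) := two_mul_card_le_card_of_neg (g := fun x => r ^ x.2 * x.1)
      (fun x hx => mem_erase.2 ⟨hne x hx, hmem x hx _ le_rfl⟩)
      (fun x hx => mem_erase.2
        ⟨neg_ne_zero.2 (hne x hx), (neg_mem_iff_of_eq_neg hA).2 (hmem x hx _ le_rfl)⟩)
      (fun x hx y hy h => ?_) fun x hx y hy h => ?_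
  · have hxy := hexp x hx y hy (.inl h)
    refine Sigma.ext (mul_left_cancel₀ (pow_ne_zero x.2 hr) ?_) (heq_of_eq hxy)
    simpa only [hxy] using h
  · have hxy := hexp x hx y hy (.inr h)
    refine hsign x.1 (mem_sigma.1 hx).1 y.1 (mem_sigma.1 hy).1
      (mul_left_cancel₀ (pow_ne_zero x.2 hr) ?_)
    simpa only [hxy, mul_neg] using h

lemma exists_isChainDecomposition (hp2 : p ≠ 2) {A : Finset (ZMod p)} (hA : A = -A) {r : ZMod p}
    (hr : r ≠ 0) (hcard : #(A.erase 0) < 2 * orderOf (r ^ 2)) :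
    ∃ U K, IsChainDecomposition r A U K := by
  have hchar : ringChar (ZMod p) ≠ 2 := by rwa [ZMod.ringChar_zmod_n]
  have hbottom : ∀ u ∈ chainBottoms r A, u ≠ 0 ∧ u ∈ A := fun u hu =>
    mem_erase.1 (mem_filter.1 hu).1
  have hlast : ∀ u ∈ chainBottoms r A,
      ∃ K, (∀ k ≤ K, r ^ k * u ∈ A) ∧ r ^ (K + 1) * u ∉ A := fun u hu =>
    exists_pow_mul_mem_and_notMem (hbottom u hu).2
      (exists_pow_mul_notMem hchar hA hr (hbottom u hu).1 hcard)
  choose! K hmem hnot using hlast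
  refine ⟨chainBottoms r A, K, fun u hu => (hbottom u hu).1, fun u hu => hmem u hu _ le_rfl, hnot,
    fun a ha ha0 => ?_, two_mul_sum_le_card_of_chains hA hr hmem⟩
  have hcard_inv : #(A.erase 0) < 2 * orderOf (r⁻¹ ^ 2) := by
    rwa [inv_pow, orderOf_inv_of_divisionMonoid]
  obtain ⟨u, hu, k, hchain, hak⟩ := exists_mem_chainBottoms hp2 hA hr ha ha0
    (exists_pow_mul_notMem hchar hA (inv_ne_zero hr) ha0 hcard_inv)
  refine ⟨u, hu, k, ?_, hak⟩
  by_contra! hk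
  exact hnot u hu (hchain _ hk)

end Chains

namespace IsChainDecomposition

variable {R : Type*} [CommRing R] [DecidableEq R] {A U : Finset R} {K : R → ℕ}

lemma isSmallMultiple (hAU : IsChainDecomposition 3 A U K) {i : U} {x : R} (hx : x ∈ A)
    (hne : x ≠ 3 ^ K i * i) (hne_neg : x ≠ -(3 ^ K i * i)) :
    IsSmallMultiple (fun u : U => K u) (fun u => (u : R)) i x := by
  by_cases hx0 : x = 0
  · exact ⟨i, 0, by simp [hx0]⟩
  obtain ⟨u, hu, k, hk, hxu⟩ := hAU.exists_eq_or_eq_neg x hx hx0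
  have hle : (3 : ℤ) ^ k ≤ 3 ^ K u := pow_le_pow_right₀ (by norm_num) hk
  have hle_self : (⟨u, hu⟩ : U) = i → 3 * (3 : ℤ) ^ k ≤ 3 ^ K i := by
    rintro rfl
    have hkK : k ≠ K u := by
      rintro rfl
      exact hxu.elim hne hne_neg
    rw [← pow_succ']
    exact pow_le_pow_right₀ (by norm_num) (by lia)
  have habs : |(3 : ℤ) ^ k| = 3 ^ k := abs_of_pos (by positivity)
  rcases hxu with rfl | rfl
  · exact ⟨⟨u, hu⟩, 3 ^ k, by rwa [habs], by rwa [habs], by simp⟩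
  · exact ⟨⟨u, hu⟩, -3 ^ k, by rwa [abs_neg, habs], by rwa [abs_neg, habs], by simp⟩

-- If one of `b`, `d` were `-t` for the top `t` of a chain, the other would be `3 * t ∉ A`.
lemma exists_add_eq (hAU : IsChainDecomposition 3 A U K) (hbal : IsBalanced A) (i : U) :
    ∃ b d, IsSmallMultiple (fun u : U => K u) (fun u => (u : R)) i b ∧
      IsSmallMultiple (fun u : U => K u) (fun u => (u : R)) i d ∧
      b ≠ 3 ^ K i * i ∧ b + d = 3 ^ K i * i + 3 ^ K i * i := by
  obtain ⟨b, hb, d, hd, hne, hsum⟩ := hbal _ (hAU.pow_mul_mem i i.2)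
  have hne' : d ≠ 3 ^ K i * i := by
    rintro rfl
    exact hne (add_right_cancel hsum)
  have hnot : 3 * (3 ^ K i * (i : R)) ∉ A := by
    rw [← mul_assoc, ← pow_succ']
    exact hAU.pow_succ_mul_notMem i i.2
  have hneg : ∀ {x y : R}, y ∈ A → x + y = 3 ^ K i * i + 3 ^ K i * i → x ≠ -(3 ^ K i * i) := by
    rintro _ y hy h rfl
    refine hnot ?_
    convert hy using 1
    linear_combination -h
  exact ⟨b, d, hAU.isSmallMultiple hb hne (hneg hd hsum),
    hAU.isSmallMultiple hd hne' (hneg hb (by rwa [add_comm])), hne, hsum⟩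

end IsChainDecomposition

lemma IsBalanced.sq_lt_three_pow_card {p : ℕ} [Fact p.Prime] (hp : 5 ≤ p)
    {A : Finset (ZMod p)} (hA : A = -A) (hbal : IsBalanced A) (hne : (A.erase 0).Nonempty) :
    p ^ 2 < 3 ^ #(A.erase 0) := by
  by_contra! hcard
  have horder : #(A.erase 0) < 2 * orderOf ((3 : ZMod p) ^ 2) := by
    refine (Nat.pow_lt_pow_iff_right (a := 3) (by norm_num)).1 (hcard.trans_lt ?_)
    rw [mul_comm, pow_mul]
    exact Nat.pow_lt_pow_left (lt_three_pow_orderOf_three_sq hp) two_ne_zero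
  obtain ⟨U, K, hAU⟩ := exists_isChainDecomposition (by lia) hA (three_ne_zero_of_five_le hp) horder
  have hsum : 3 ^ ∑ u ∈ U, (K u + 1) ≤ p := by
    refine (Nat.pow_le_pow_iff_left two_ne_zero).1 (hcard.trans' ?_)
    rw [← pow_mul, mul_comm]
    exact Nat.pow_le_pow_right three_pos hAU.two_mul_sum_le
  have hv : (fun u : U => (u : ZMod p)) ≠ 0 := by
    obtain ⟨a, ha⟩ := hne
    obtain ⟨ha0, haA⟩ := mem_erase.1 ha
    obtain ⟨u, hu, -⟩ := hAU.exists_eq_or_eq_neg a haA ha0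
    exact Function.ne_iff.2 ⟨⟨u, hu⟩, hAU.ne_zero u hu⟩
  obtain ⟨T, hT, hTbal, hTcard⟩ := exists_isBalanced_card_le (h := fun u : U => K u)
    (by rwa [sum_coe_sort U fun u => K u + 1]) hv (hAU.exists_add_eq hbal)
  have hTle : #T ≤ ∑ u ∈ U, (K u + 1) := by
    rw [Fintype.card_coe] at hTcard
    exact hTcard.trans (by simp [sum_add_distrib])
  exact (hTbal.lt_three_pow_card hT).not_ge ((Nat.pow_le_pow_right three_pos hTle).trans hsum)

-- The difference `a - (-a) = a + a` has another representation `b - c`, and then `a` is the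
-- midpoint of `b` and `-c`.
lemma isBalanced_of_not_hasUniqueDifference {p : ℕ} {A : Finset (ZMod p)} (hA : A = -A)
    (h : ¬HasUniqueDifference A) : IsBalanced A := by
  intro a ha
  by_contra! hmid
  refine h ⟨a + a, card_eq_one.2 ⟨(a, -a), ?_⟩⟩
  ext ⟨b, c⟩
  simp only [mem_filter, mem_product, mem_singleton, Prod.mk.injEq]
  constructor
  · rintro ⟨⟨hb, hc⟩, hbc⟩
    have hba : b = a := by
      by_contra hba
      exact hmid b hb (-c) ((neg_mem_iff_of_eq_neg hA).2 hc) hba (by rw [← hbc, sub_eq_add_neg])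
    exact ⟨hba, by linear_combination hba - hbc⟩
  · rintro ⟨rfl, rfl⟩
    exact ⟨⟨ha, (neg_mem_iff_of_eq_neg hA).2 ha⟩, sub_neg_eq_add b b⟩

lemma IsBalanced.nonempty_erase {G : Type*} [Add G] [DecidableEq G] {A : Finset G}
    (hbal : IsBalanced A) (hA : A.Nonempty) (a : G) : (A.erase a).Nonempty := by
  obtain ⟨x, hx⟩ := hA
  by_cases hxa : x = a
  · obtain ⟨b, hb, -, -, hbx, -⟩ := hbal x hx
    exact ⟨b, mem_erase.2 ⟨hxa ▸ hbx, hb⟩⟩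
  · exact ⟨x, mem_erase.2 ⟨hxa, hx⟩⟩

lemma three_pow_le_sq_iff_le_two_mul_logb {n p : ℕ} (hp : 0 < p) :
    3 ^ n ≤ p ^ 2 ↔ (n : ℝ) ≤ 2 * Real.logb 3 p := by
  have hlog : Real.logb 3 ((p : ℝ) ^ 2) = 2 * Real.logb 3 p := by
    simpa using Real.logb_pow 3 (p : ℝ) 2
  rw [← hlog, Real.le_logb_iff_rpow_le (by norm_num) (by positivity), Real.rpow_natCast]
  norm_cast

/-- Let `p ≥ 5` be a prime and let `A` be a nonempty symmetric subset of `𝔽_p` with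
`|A \ {0}| ≤ 2·log₃(p)`. Then `A` has a unique difference. -/
theorem unique_difference_of_symmetric (p : ℕ) (hp : p.Prime) (hp5 : 5 ≤ p)
    (A : Finset (ZMod p)) (hA : A.Nonempty) (hsym : A = -A)
    (hcard : ((A.erase 0).card : ℝ) ≤ 2 * Real.logb 3 p) :
    HasUniqueDifference A := by
  have : Fact p.Prime := ⟨hp⟩
  by_contra hnot
  have hbal : IsBalanced A := isBalanced_of_not_hasUniqueDifference hsym hnot
  have hlt : p ^ 2 < 3 ^ #(A.erase 0) :=
    hbal.sq_lt_three_pow_card hp5 hsym (hbal.nonempty_erase hA 0)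
  exact hlt.not_ge ((three_pow_le_sq_iff_le_two_mul_logb hp.pos).2 hcard)
end

section
/- For every ε > 0 there exists a constant C(ε) such that for every prime p > C(ε) there exists a nonempty symmetric subset A of 𝔽_p with |A| ≤ (2+ε)·log₃(p) which has no unique difference. (In the paper's notation: g(p) ≤ (2+ε)·log₃(p) for all primes p > C(ε).) -/
open Finset Pointwise

/-!
If a symmetric set `A` has a unique difference `a - b`, then `a - b = (-b) - (-a)` forces `b = -a`,
so the difference is `2a`. It therefore suffices that every `a ∈ A` is the midpoint of two other
elements `c, d` of `A`, since then `2a = c - (-d)` is a second representation.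

For a modulus `n`, put `q = 2 * 3 ^ m` and let `A` consist of the residues of a bounded interval
around `0` and of the numbers `± 3 ^ j * ⌊n / q ^ k⌋` with `j ≤ m` and `1 ≤ k`.
For `j < m` the element `b = 3 ^ j * ⌊n / q ^ k⌋` is the midpoint of `3b` and `-b`; for `j = m` it
is the midpoint of `c = ⌊n / q ^ (k - 1)⌋` and `2b - c`, which lies in the interval. The chain
starts at `c = n`, that is at `0 ∈ A`. One block of `2 (m + 1)` residues is spent for each factor
`q > 3 ^ m`, which gives `|A| ≤ 2 (1 + 1 / m) log₃ n + O_m(1)`.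
-/

section Midpoint

variable {G : Type*} [AddCommGroup G]

/-- `a` is the midpoint of a nondegenerate pair `c, d` of elements of `A`. Midpoints are expressed
by `c + d = 2 • a`, as `2` need not be invertible. -/
def IsProperMidpoint (A : Finset G) (a : G) : Prop :=
  ∃ c ∈ A, ∃ d ∈ A, c ≠ a ∧ c + d = 2 • a

lemma IsProperMidpoint.neg {A : Finset G} {a : G} (hA : ∀ x ∈ A, -x ∈ A)
    (ha : IsProperMidpoint A a) : IsProperMidpoint A (-a) := by
  obtain ⟨c, hc, d, hd, hca, hcd⟩ := ha
  refine ⟨-c, hA c hc, -d, hA d hd, neg_injective.ne hca, ?_⟩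
  rw [← neg_add, hcd, smul_neg]

end Midpoint

lemma not_hasUniqueDifference_of_isProperMidpoint {n : ℕ} {A : Finset (ZMod n)}
    (hA : ∀ a ∈ A, -a ∈ A) (hmid : ∀ a ∈ A, IsProperMidpoint A a) :
    ¬ HasUniqueDifference A := by
  rintro ⟨x, hx⟩
  obtain ⟨⟨a, b⟩, hab⟩ := card_eq_one.1 hx
  have mem_iff (u v : ZMod n) : (u ∈ A ∧ v ∈ A) ∧ u - v = x ↔ u = a ∧ v = b := by
    simpa using Finset.ext_iff.1 hab (u, v)
  obtain ⟨⟨ha, hb⟩, hdiff⟩ := (mem_iff a b).2 ⟨rfl, rfl⟩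
  have hneg : -a = b := ((mem_iff (-b) (-a)).1 ⟨⟨hA b hb, hA a ha⟩, by rw [← hdiff]; ring⟩).2
  obtain ⟨c, hc, d, hd, hca, hcd⟩ := hmid a ha
  refine hca ((mem_iff c (-d)).1 ⟨⟨hc, hA d hd⟩, ?_⟩).1
  rw [sub_neg_eq_add, hcd, ← hdiff, ← hneg, two_nsmul, sub_neg_eq_add]

section SymmetricResidues

/-- The residues modulo `n` of the elements of `P` and of their negatives: a symmetric set given
by its nonnegative half. -/
def symmetricResidues (n : ℕ) (P : Finset ℕ) : Finset (ZMod n) :=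
  P.image (fun x : ℕ ↦ (x : ZMod n)) ∪ -P.image (fun x : ℕ ↦ (x : ZMod n))

variable {n : ℕ} {P : Finset ℕ}

lemma neg_symmetricResidues : -symmetricResidues n P = symmetricResidues n P := by
  ext a
  simp only [symmetricResidues, mem_neg', mem_union, neg_neg, or_comm]

lemma neg_mem_symmetricResidues {a : ZMod n} (ha : a ∈ symmetricResidues n P) :
    -a ∈ symmetricResidues n P := by
  rw [← neg_symmetricResidues]
  exact neg_mem_neg ha

lemma natCast_mem_symmetricResidues {x : ℕ} (hx : x ∈ P) :
    (x : ZMod n) ∈ symmetricResidues n P :=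
  mem_union_left _ (mem_image_of_mem _ hx)

lemma intCast_mem_symmetricResidues {z : ℤ} (hz : z.natAbs ∈ P) :
    (z : ZMod n) ∈ symmetricResidues n P := by
  have hmem := natCast_mem_symmetricResidues (n := n) hz
  rcases z.natAbs_eq with h | h <;> rw [h]
  · rwa [Int.cast_natCast]
  · rw [Int.cast_neg, Int.cast_natCast]
    exact neg_mem_symmetricResidues hmem

lemma card_symmetricResidues_le : (symmetricResidues n P).card ≤ 2 * P.card := by
  refine (card_union_le _ _).trans ?_
  rw [card_neg, two_mul]
  exact add_le_add card_image_le card_image_le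

lemma isProperMidpoint_symmetricResidues
    (h : ∀ x ∈ P, IsProperMidpoint (symmetricResidues n P) (x : ZMod n)) :
    ∀ a ∈ symmetricResidues n P, IsProperMidpoint (symmetricResidues n P) a := by
  have hpos : ∀ a ∈ P.image (fun x : ℕ ↦ (x : ZMod n)),
      IsProperMidpoint (symmetricResidues n P) a := by
    simpa only [forall_mem_image] using h
  intro a ha
  rcases mem_union.1 ha with ha | ha
  · exact hpos a ha
  · rw [← neg_neg a]
    exact (hpos (-a) (mem_neg'.1 ha)).neg fun _ ↦ neg_mem_symmetricResidues

end SymmetricResidues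

section StepClosed

/-- Every element of `B` has a successor, either in `B` or equal to `n`, which is its triple or
exceeds its double by at most `R`. Modulo `n` the element `b` is then the midpoint of its successor
`c` and `2b - c`, which is `-b` or small; the value `c = n` stands for the residue `0`. -/
def IsStepClosed (n R : ℕ) (B : Finset ℕ) : Prop :=
  ∀ b ∈ B, ∃ c ∈ insert n B, b < c ∧ c ≤ n ∧ (c = 3 * b ∨ 2 * b ≤ c ∧ c ≤ 2 * b + R)

lemma natCast_ne_natCast_of_lt_add {n b c : ℕ} (hbc : b < c) (hcn : c < b + n) :
    (c : ZMod n) ≠ b := by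
  intro h
  have hdvd : n ∣ c - b :=
    (Nat.modEq_iff_dvd' hbc.le).1 ((ZMod.natCast_eq_natCast_iff b c n).1 h.symm)
  have := Nat.le_of_dvd (Nat.sub_pos_of_lt hbc) hdvd
  omega

variable {n R K : ℕ} {B : Finset ℕ}

lemma intCast_mem_symmetricResidues_of_natAbs_le (hKB : K ∈ B) {z : ℤ} (hz : z.natAbs ≤ K) :
    (z : ZMod n) ∈ symmetricResidues n (range K ∪ B) := by
  refine intCast_mem_symmetricResidues (mem_union.2 ?_)
  rcases hz.lt_or_eq with hlt | heq
  · exact Or.inl (mem_range.2 hlt)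
  · exact Or.inr (heq ▸ hKB)

lemma isProperMidpoint_natCast_of_lt (hn : 1 < n) (hKB : K ∈ B) {x : ℕ} (hx : x < K) :
    IsProperMidpoint (symmetricResidues n (range K ∪ B)) (x : ZMod n) := by
  refine ⟨((x + 1 : ℤ) : ZMod n), intCast_mem_symmetricResidues_of_natAbs_le hKB (by omega),
    ((x - 1 : ℤ) : ZMod n), intCast_mem_symmetricResidues_of_natAbs_le hKB (by omega), ?_, ?_⟩
  · exact_mod_cast natCast_ne_natCast_of_lt_add x.lt_succ_self (by omega)
  · push_cast
    ring

lemma IsStepClosed.isProperMidpoint_of_mem (hB : IsStepClosed n R B) (hRK : R ≤ K) (hKB : K ∈ B)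
    {b : ℕ} (hbB : b ∈ B) (hb : 0 < b) :
    IsProperMidpoint (symmetricResidues n (range K ∪ B)) (b : ZMod n) := by
  obtain ⟨c, hc, hbc, hcn, hstep⟩ := hB b hbB
  have hcA : (c : ZMod n) ∈ symmetricResidues n (range K ∪ B) := by
    rcases mem_insert.1 hc with rfl | hcB
    · simpa using intCast_mem_symmetricResidues_of_natAbs_le (n := c) hKB (z := 0) (by simp)
    · exact natCast_mem_symmetricResidues (mem_union_right _ hcB)
  have hdA : ((2 * b - c : ℤ) : ZMod n) ∈ symmetricResidues n (range K ∪ B) := by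
    rcases hstep with htriple | hdouble
    · apply intCast_mem_symmetricResidues
      rw [show (2 * b - c : ℤ).natAbs = b by omega]
      exact mem_union_right _ hbB
    · exact intCast_mem_symmetricResidues_of_natAbs_le hKB (by omega)
  refine ⟨c, hcA, _, hdA, natCast_ne_natCast_of_lt_add hbc (by omega), ?_⟩
  push_cast
  ring

lemma IsStepClosed.not_hasUniqueDifference (hB : IsStepClosed n R B) (hRK : R ≤ K) (hKB : K ∈ B)
    (hK : 0 < K) : ¬ HasUniqueDifference (symmetricResidues n (range K ∪ B)) := by
  have hn : 1 < n := by
    obtain ⟨c, -, hKc, hcn, -⟩ := hB K hKB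
    omega
  refine not_hasUniqueDifference_of_isProperMidpoint (fun _ ↦ neg_mem_symmetricResidues)
    (isProperMidpoint_symmetricResidues fun x hx ↦ ?_)
  rcases lt_or_ge x K with hxK | hKx
  · exact isProperMidpoint_natCast_of_lt hn hKB hxK
  · have hxB : x ∈ B := (mem_union.1 hx).resolve_left fun h ↦ hKx.not_gt (mem_range.1 h)
    exact hB.isProperMidpoint_of_mem hRK hKB hxB (hK.trans_le hKx)

end StepClosed

section TriplingChain

/-- The numbers `3 ^ j * ⌊n / (2 * 3 ^ m) ^ k⌋` with `0 ≤ j ≤ m` and `1 ≤ k ≤ M`: `M` blocks of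
repeated tripling, consecutive blocks being linked by an approximate doubling. The index `k` is
shifted by one in the definition. -/
def triplingChain (m n M : ℕ) : Finset ℕ :=
  (range (m + 1) ×ˢ range M).image fun jk ↦ 3 ^ jk.1 * (n / (2 * 3 ^ m) ^ (jk.2 + 1))

variable {m n M : ℕ}

lemma mem_triplingChain {b : ℕ} :
    b ∈ triplingChain m n M ↔
      ∃ j ≤ m, ∃ k < M, 3 ^ j * (n / (2 * 3 ^ m) ^ (k + 1)) = b := by
  simp [triplingChain, and_assoc]

lemma card_triplingChain_le : (triplingChain m n M).card ≤ (m + 1) * M := by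
  simpa [triplingChain] using
    card_image_le (s := range (m + 1) ×ˢ range M)
      (f := fun jk ↦ 3 ^ jk.1 * (n / (2 * 3 ^ m) ^ (jk.2 + 1)))

lemma div_pow_mem_insert_triplingChain {k : ℕ} (hk : k ≤ M) :
    n / (2 * 3 ^ m) ^ k ∈ insert n (triplingChain m n M) := by
  cases k with
  | zero => simp
  | succ k => exact mem_insert_of_mem (mem_triplingChain.2 ⟨0, m.zero_le, k, hk, by simp⟩)

lemma isStepClosed_triplingChain (hM : (2 * 3 ^ m) ^ M ≤ n) :
    IsStepClosed n (2 * 3 ^ m) (triplingChain m n M) := by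
  intro b hb
  obtain ⟨j, hj, k, hk, rfl⟩ := mem_triplingChain.1 hb
  set prev := n / (2 * 3 ^ m) ^ k with hprev
  set next := n / (2 * 3 ^ m) ^ (k + 1) with hnext
  have hnext_pos : 0 < next :=
    Nat.div_pos ((Nat.pow_le_pow_right (by positivity) hk).trans hM) (by positivity)
  have hnext_eq : next = prev / (2 * 3 ^ m) := by
    rw [hnext, hprev, pow_succ, Nat.div_div_eq_div_mul]
  have hprev_le : prev ≤ n := Nat.div_le_self _ _
  have hlower : 2 * (3 ^ m * next) ≤ prev := by
    rw [← mul_assoc, hnext_eq]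
    exact Nat.mul_div_le _ _
  have hupper : prev ≤ 2 * (3 ^ m * next) + 2 * 3 ^ m := by
    rw [← mul_assoc, hnext_eq, ← mul_add_one]
    exact (Nat.lt_mul_div_succ prev (by positivity)).le
  have hb_pos : 0 < 3 ^ j * next := by positivity
  rcases hj.lt_or_eq with hjm | rfl
  · have htriple : 3 ^ (j + 1) * next = 3 * (3 ^ j * next) := by ring
    have htriple_le : 3 ^ (j + 1) * next ≤ 3 ^ m * next :=
      Nat.mul_le_mul_right _ (Nat.pow_le_pow_right (by norm_num) hjm)
    exact ⟨3 ^ (j + 1) * next, mem_insert_of_mem (mem_triplingChain.2 ⟨j + 1, hjm, k, hk, rfl⟩),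
      by omega, by omega, Or.inl htriple⟩
  · exact ⟨prev, div_pow_mem_insert_triplingChain hk.le, by omega, hprev_le,
      Or.inr ⟨hlower, hupper⟩⟩

end TriplingChain

theorem exists_symmetric_card_le_not_hasUniqueDifference {m n : ℕ} (hn : (2 * 3 ^ m) ^ 2 ≤ n) :
    ∃ A : Finset (ZMod n), A.Nonempty ∧ A = -A ∧
      A.card ≤ 2 * ((2 * 3 ^ m) ^ 2 + (m + 1) * Nat.log (2 * 3 ^ m) n) ∧
      ¬ HasUniqueDifference A := by
  set q := 2 * 3 ^ m
  have hq_gt : 1 < q := one_lt_mul_of_lt_of_le one_lt_two (Nat.one_le_pow' m 2)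
  have hn_ne : n ≠ 0 := (lt_of_lt_of_le (by positivity) hn).ne'
  obtain ⟨M, hlog⟩ : ∃ M, Nat.log q n = M + 2 :=
    Nat.exists_eq_add_of_le' (Nat.le_log_of_pow_le hq_gt hn)
  have hpow_le : q ^ (M + 2) ≤ n := hlog ▸ Nat.pow_log_le_self q hn_ne
  have hlt_pow : n < q ^ (M + 3) := by simpa [hlog] using Nat.lt_pow_succ_log_self hq_gt n
  set K := n / q ^ (M + 1) with hK
  have hqK : q ≤ K := by
    rw [hK, Nat.le_div_iff_mul_le (by positivity), ← pow_succ']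
    exact hpow_le
  have hKq : K < q ^ 2 := by
    rw [hK, Nat.div_lt_iff_lt_mul (by positivity), ← pow_add, show 2 + (M + 1) = M + 3 by ring]
    exact hlt_pow
  have hKB : K ∈ triplingChain m n (M + 1) :=
    mem_triplingChain.2 ⟨0, m.zero_le, M, M.lt_succ_self, by rw [pow_zero, one_mul]⟩
  have hclosed : IsStepClosed n q (triplingChain m n (M + 1)) :=
    isStepClosed_triplingChain ((Nat.pow_le_pow_right hq_gt.le (by omega)).trans hpow_le)
  refine ⟨symmetricResidues n (range K ∪ triplingChain m n (M + 1)),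
    ⟨K, natCast_mem_symmetricResidues (mem_union_right _ hKB)⟩, neg_symmetricResidues.symm, ?_,
    hclosed.not_hasUniqueDifference hqK hKB (by omega)⟩
  calc _ ≤ 2 * (range K ∪ triplingChain m n (M + 1)).card := card_symmetricResidues_le
    _ ≤ 2 * (K + (m + 1) * (M + 1)) := by
        gcongr
        refine (card_union_le _ _).trans ?_
        rw [card_range]
        exact Nat.add_le_add_left card_triplingChain_le K
    _ ≤ 2 * (q ^ 2 + (m + 1) * Nat.log q n) := by
        gcongr
        omega

lemma mul_log_le_logb_three (m : ℕ) {n : ℕ} (hn : n ≠ 0) :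
    (m * Nat.log (2 * 3 ^ m) n : ℝ) ≤ Real.logb 3 n := by
  have hpow : 3 ^ (m * Nat.log (2 * 3 ^ m) n) ≤ n := calc
    3 ^ (m * Nat.log (2 * 3 ^ m) n) = (3 ^ m) ^ Nat.log (2 * 3 ^ m) n := pow_mul _ _ _
    _ ≤ (2 * 3 ^ m) ^ Nat.log (2 * 3 ^ m) n := Nat.pow_le_pow_left (by omega) _
    _ ≤ n := Nat.pow_log_le_self _ hn
  rw [Real.le_logb_iff_rpow_le (by norm_num) (by positivity)]
  exact_mod_cast hpow

theorem g_le_two_plus_eps_log_three_general (ε : ℝ) (hε : 0 < ε) :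
    ∃ C : ℝ, ∀ n : ℕ, (n : ℝ) > C →
      ∃ A : Finset (ZMod n), A.Nonempty ∧ A = -A ∧
        (A.card : ℝ) ≤ (2 + ε) * Real.logb 3 n ∧ ¬ HasUniqueDifference A := by
  obtain ⟨m, hm⟩ := exists_nat_gt (4 / ε)
  set Q : ℕ := (2 * 3 ^ m) ^ 2
  refine ⟨max Q (3 ^ (4 * Q / ε)), fun n hn ↦ ?_⟩
  obtain ⟨hQn, hlog⟩ := max_lt_iff.1 hn
  have hn_pos : (0 : ℝ) < n := Q.cast_nonneg.trans_lt hQn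
  obtain ⟨A, hne, hsymm, hcard, hA⟩ :=
    exists_symmetric_card_le_not_hasUniqueDifference (Nat.cast_lt.1 hQn).le
  refine ⟨A, hne, hsymm, ?_, hA⟩
  set N := Nat.log (2 * 3 ^ m) n
  set L := Real.logb 3 n
  have hblocks : (m * N : ℝ) ≤ L := mul_log_le_logb_three m (Nat.cast_pos.1 hn_pos).ne'
  have hinterval : 2 * (Q : ℝ) ≤ ε / 2 * L := by
    have := (Real.lt_logb_iff_rpow_lt (by norm_num) hn_pos).2 hlog
    rw [div_lt_iff₀ hε] at this
    linarith
  have hlinks : 2 * (N : ℝ) ≤ ε / 2 * L := by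
    rw [div_lt_iff₀ hε] at hm
    calc 2 * (N : ℝ) = 4 * N / 2 := by ring
      _ ≤ m * ε * N / 2 := by gcongr
      _ = ε / 2 * (m * N) := by ring
      _ ≤ ε / 2 * L := by gcongr
  calc (A.card : ℝ) ≤ 2 * (Q + (m + 1) * N) := by exact_mod_cast hcard
    _ = 2 * Q + 2 * (m * N) + 2 * N := by ring
    _ ≤ ε / 2 * L + 2 * L + ε / 2 * L := by gcongr
    _ = (2 + ε) * L := by ring

/-- For every `ε > 0` there is a constant `C(ε)` such that for every prime `p > C(ε)`
there exists a nonempty symmetric subset of `𝔽_p` of size at most `(2+ε)·log₃(p)`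
with no unique difference, i.e. `g(p) ≤ (2+ε) log₃ p` for large `p`. -/
theorem g_le_two_plus_eps_log_three (ε : ℝ) (hε : 0 < ε) :
    ∃ C : ℝ, ∀ p : ℕ, p.Prime → (p : ℝ) > C →
      ∃ A : Finset (ZMod p), A.Nonempty ∧ A = -A ∧
        (A.card : ℝ) ≤ (2 + ε) * Real.logb 3 p ∧ ¬ HasUniqueDifference A := by
  obtain ⟨C, hC⟩ := g_le_two_plus_eps_log_three_general ε hε
  exact ⟨C, fun p _ hp ↦ hC p hp⟩
end

section
/- Let m ≤ n and let A be an m×n real matrix with rows r₁, …, r_m. Set d(1) = ‖r₁‖ (the Euclidean norm), and for 2 ≤ j ≤ m let d(j) be the Euclidean distance of r_j from the linear subspace of ℝⁿ spanned by r₁, …, r_{j−1}. Then det(A·Aᵀ) = ∏_{j=1}^{m} d(j)². -/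
open Finset Matrix

/-!
The Gram–Schmidt vectors `g j` satisfy `v j = g j + (a combination of the g k with k < j)`. Hence
`gram v = Cᴴ * gram g * C` with `C` unitriangular and `gram g` diagonal, and `det (gram v)` is the
product of the `‖g j‖ ^ 2`. Since `g j` is the component of `v j` orthogonal to the span of the
preceding vectors, its norm is the distance of `v j` from that span.
-/

open InnerProductSpace Submodule

section Gram

variable {𝕜 E ι κ : Type*} [RCLike 𝕜] [SeminormedAddCommGroup E] [InnerProductSpace 𝕜 E]

theorem gram_sum_smul [Fintype κ] (C : Matrix κ ι 𝕜) (w : κ → E) :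
    gram 𝕜 (fun j ↦ ∑ k, C k j • w k) = Cᴴ * gram 𝕜 w * C := by
  ext i j
  rw [gram_apply, ← star_dotProduct_gram_mulVec, Matrix.mul_assoc]
  rfl

theorem gram_eq_diagonal_of_pairwise_inner_eq_zero [DecidableEq ι] {w : ι → E}
    (hw : Pairwise fun i j ↦ inner 𝕜 (w i) (w j) = 0) :
    gram 𝕜 w = diagonal fun i ↦ (‖w i‖ : 𝕜) ^ 2 := by
  ext i j
  obtain rfl | hij := eq_or_ne i j
  · simp [inner_self_eq_norm_sq_to_K]
  · simp [hij, hw hij]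

theorem gram_toLp_row [Fintype κ] (A : Matrix ι κ 𝕜) :
    gram 𝕜 (fun i ↦ WithLp.toLp 2 (A.row i)) = (A * Aᴴ)ᵀ := by
  ext i j
  simp [EuclideanSpace.inner_toLp_toLp, mul_apply, dotProduct]

end Gram

section InfDist

variable {𝕜 E ι : Type*}

theorem infDist_span_image_Iio_of_isMin [Semiring 𝕜] [SeminormedAddCommGroup E] [Module 𝕜 E]
    [Preorder ι] (v : ι → E) {j : ι} (hj : IsMin j) :
    Metric.infDist (v j) (span 𝕜 (v '' Set.Iio j)) = ‖v j‖ := by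
  simp [hj.Iio_eq]

theorem infDist_eq_norm_sub_of_mem_of_sub_mem_orthogonal [RCLike 𝕜] [NormedAddCommGroup E]
    [InnerProductSpace 𝕜 E] {K : Submodule 𝕜 E} {x y : E} (hy : y ∈ K) (hxy : x - y ∈ Kᗮ) :
    Metric.infDist x K = ‖x - y‖ := by
  rw [(K.norm_eq_iInf_iff_inner_eq_zero hy).2 ((K.mem_orthogonal' _).1 hxy),
    Metric.infDist_eq_iInf]
  simp only [dist_eq_norm, SetLike.coe_sort_coe]

end InfDist

section GramSchmidt

variable {𝕜 E ι : Type*} [RCLike 𝕜] [NormedAddCommGroup E] [InnerProductSpace 𝕜 E]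
  [LinearOrder ι] [LocallyFiniteOrderBot ι] [WellFoundedLT ι]

theorem sub_gramSchmidt_mem_span (v : ι → E) (j : ι) :
    v j - gramSchmidt 𝕜 v j ∈ span 𝕜 (v '' Set.Iio j) := by
  rw [← span_gramSchmidt_Iio, sub_eq_iff_eq_add'.2 (gramSchmidt_def'' 𝕜 v j)]
  exact sum_mem fun i hi ↦ smul_mem _ _ <|
    subset_span <| Set.mem_image_of_mem _ (Finset.mem_Iio.1 hi)

theorem gramSchmidt_mem_orthogonal_span (v : ι → E) (j : ι) :
    gramSchmidt 𝕜 v j ∈ (span 𝕜 (v '' Set.Iio j))ᗮ := by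
  rw [← span_singleton_le_iff_mem, ← isOrtho_iff_le, isOrtho_span]
  rintro _ rfl _ ⟨i, hij, rfl⟩
  exact gramSchmidt_inv_triangular 𝕜 v hij

theorem infDist_span_image_Iio_eq_norm_gramSchmidt (v : ι → E) (j : ι) :
    Metric.infDist (v j) (span 𝕜 (v '' Set.Iio j)) = ‖gramSchmidt 𝕜 v j‖ := by
  have horth : v j - (v j - gramSchmidt 𝕜 v j) ∈ (span 𝕜 (v '' Set.Iio j))ᗮ := by
    rw [sub_sub_cancel]
    exact gramSchmidt_mem_orthogonal_span v j
  rw [infDist_eq_norm_sub_of_mem_of_sub_mem_orthogonal (sub_gramSchmidt_mem_span v j) horth,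
    sub_sub_cancel]

variable (𝕜) in
/-- The unitriangular change-of-basis matrix of the Gram–Schmidt process: column `j` expresses
`v j` in terms of the Gram–Schmidt vectors. Where a Gram–Schmidt vector vanishes, the
coefficients above the diagonal in its row are `0 / 0 = 0`. -/
noncomputable def gramSchmidtCoeff (v : ι → E) : Matrix ι ι 𝕜 :=
  1 + of fun k j ↦
    if k < j then inner 𝕜 (gramSchmidt 𝕜 v k) (v j) / (‖gramSchmidt 𝕜 v k‖ : 𝕜) ^ 2 else 0

variable [Fintype ι]

theorem sum_gramSchmidtCoeff_smul_gramSchmidt (v : ι → E) (j : ι) :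
    ∑ k, gramSchmidtCoeff 𝕜 v k j • gramSchmidt 𝕜 v k = v j := by
  conv_rhs => rw [gramSchmidt_def'' 𝕜 v j]
  simp [gramSchmidtCoeff, one_apply, add_smul, sum_add_distrib, ite_smul, ← sum_filter,
    filter_gt_eq_Iio]

theorem det_gramSchmidtCoeff (v : ι → E) : (gramSchmidtCoeff 𝕜 v).det = 1 := by
  have upper_triangular : (gramSchmidtCoeff 𝕜 v).IsUpperTriangular := by
    intro k j hjk
    have hjk : j < k := hjk
    simp [gramSchmidtCoeff, hjk.ne', hjk.not_gt]
  rw [det_of_isUpperTriangular upper_triangular]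
  simp [gramSchmidtCoeff]

theorem gram_eq_gramSchmidtCoeff_conj_diagonal (v : ι → E) :
    gram 𝕜 v = (gramSchmidtCoeff 𝕜 v)ᴴ * diagonal (fun j ↦ (‖gramSchmidt 𝕜 v j‖ : 𝕜) ^ 2) *
      gramSchmidtCoeff 𝕜 v := by
  rw [← gram_eq_diagonal_of_pairwise_inner_eq_zero (gramSchmidt_pairwise_orthogonal 𝕜 v),
    ← gram_sum_smul]
  simp only [sum_gramSchmidtCoeff_smul_gramSchmidt]

theorem det_gram_eq_prod_norm_gramSchmidt_sq (v : ι → E) :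
    (gram 𝕜 v).det = ∏ j, (‖gramSchmidt 𝕜 v j‖ : 𝕜) ^ 2 := by
  rw [gram_eq_gramSchmidtCoeff_conj_diagonal, det_mul, det_mul, det_conjTranspose,
    det_gramSchmidtCoeff, det_diagonal, star_one, one_mul, mul_one]

end GramSchmidt

theorem det_gram_eq_prod_dist_sq_general {𝕜 E ι : Type*} [RCLike 𝕜] [NormedAddCommGroup E]
    [InnerProductSpace 𝕜 E] [LinearOrder ι] [Fintype ι] (v : ι → E) :
    (gram 𝕜 v).det = ∏ j, (Metric.infDist (v j) (span 𝕜 (v '' Set.Iio j)) : 𝕜) ^ 2 := by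
  let _ : LocallyFiniteOrderBot ι :=
    { finsetIio := fun j ↦ {i | i < j}
      finsetIic := fun j ↦ {i | i ≤ j}
      finset_mem_Iic := by simp
      finset_mem_Iio := by simp }
  simp only [det_gram_eq_prod_norm_gramSchmidt_sq, infDist_span_image_Iio_eq_norm_gramSchmidt]

/-- Let `m ≤ n` and let `A` be an `m×n` real matrix with rows `r 0, …, r (m-1)`
(viewed as vectors in Euclidean space `ℝⁿ`).  Let `d j` be the Euclidean norm of
the first row when `j = 0`, and the Euclidean distance of row `j` from the linear
span of the previous rows when `j > 0`.  Then `det(A·Aᵀ) = ∏ j, (d j)²`. -/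
theorem det_gram_eq_prod_dist_sq (m n : ℕ) (hmn : m ≤ n)
    (A : Matrix (Fin m) (Fin n) ℝ)
    (r : Fin m → EuclideanSpace ℝ (Fin n)) (hr : ∀ i j, r i j = A i j)
    (d : Fin m → ℝ)
    (hd0 : ∀ j : Fin m, (j : ℕ) = 0 → d j = ‖r j‖)
    (hd : ∀ j : Fin m, 0 < (j : ℕ) →
      d j = Metric.infDist (r j)
        (↑(Submodule.span ℝ (r '' {i | (i : ℕ) < (j : ℕ)})) : Set (EuclideanSpace ℝ (Fin n)))) :
    (A * Aᵀ).det = ∏ j, (d j) ^ 2 := by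
  have hdist (j : Fin m) : d j = Metric.infDist (r j) (span ℝ (r '' Set.Iio j)) := by
    obtain hj | hj := Nat.eq_zero_or_pos (j : ℕ)
    · have j_isMin : IsMin j := fun i _ ↦ Fin.le_def.2 (by lia)
      rw [hd0 j hj, infDist_span_image_Iio_of_isMin r j_isMin]
    · exact hd j hj
  have hrows : r = fun i ↦ WithLp.toLp 2 (A.row i) := by
    ext i j
    exact hr i j
  rw [← conjTranspose_eq_transpose_of_trivial, ← det_transpose, ← gram_toLp_row, ← hrows,
    det_gram_eq_prod_dist_sq_general]
  simp only [hdist, RCLike.ofReal_real_eq_id, id]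
end

section
/- Let A be a u×n real matrix, let B be a w×n real matrix, and let C be the (u+w)×n matrix obtained by stacking A on top of B (the first u rows of C are the rows of A and the remaining w rows are the rows of B). Then det(C·Cᵀ) ≤ det(A·Aᵀ)·det(B·Bᵀ). -/
open Matrix

/-!
Fischer's inequality: a positive semidefinite block matrix has determinant at most the product of
the determinants of its diagonal blocks. If the matrix is singular there is nothing to prove.
Otherwise its upper left block `A` is positive definite, and the determinant is that of `A` times
that of the Schur complement `D - Bᴴ * A⁻¹ * B`, which lies below `D` in the Loewner order; the
determinant is monotone for that order. The theorem is the case of the Gram matrix of the stacked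
rows.
-/

section

open scoped ComplexOrder MatrixOrder

variable {𝕜 m n k : Type*} [RCLike 𝕜] [Fintype m] [DecidableEq m] [Fintype n] [DecidableEq n]
  [Fintype k]

lemma det_one_add_eq_prod_one_add_eigenvalues {P : Matrix n n 𝕜} (hP : P.IsHermitian) :
    (1 + P).det = ∏ i, (1 + (hP.eigenvalues i : 𝕜)) := by
  let U : Matrix n n 𝕜 := hP.eigenvectorUnitary
  let Λ : Matrix n n 𝕜 := diagonal fun i ↦ (hP.eigenvalues i : 𝕜)
  have hU : star U * U = 1 := Unitary.coe_star_mul_self hP.eigenvectorUnitary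
  calc (1 + P).det = (1 + U * (Λ * star U)).det := by
        rw [← Matrix.mul_assoc]
        exact congrArg (fun Q ↦ (1 + Q).det) hP.spectral_theorem
    _ = (1 + Λ).det := by
        rw [det_one_add_mul_comm, Matrix.mul_assoc, hU, Matrix.mul_one]
    _ = ∏ i, (1 + (hP.eigenvalues i : 𝕜)) := by
        rw [← diagonal_one, diagonal_add, det_diagonal]

lemma one_le_det_one_add_of_posSemidef {P : Matrix n n 𝕜} (hP : P.PosSemidef) :
    1 ≤ (1 + P).det := by
  rw [det_one_add_eq_prod_one_add_eigenvalues hP.isHermitian]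
  refine Finset.one_le_prod fun i _ ↦ le_add_of_nonneg_right ?_
  exact_mod_cast hP.eigenvalues_nonneg i

lemma det_le_det_add_of_posSemidef {S T : Matrix n n 𝕜} (hS : S.PosSemidef)
    (hT : T.PosSemidef) : S.det ≤ (S + T).det := by
  by_cases hdet : S.det = 0
  · exact hdet ▸ (hS.add hT).det_nonneg
  · obtain ⟨Y, rfl⟩ := CStarAlgebra.nonneg_iff_eq_star_mul_self.mp hT.nonneg
    rw [det_add_mul _ _ (isUnit_iff_ne_zero.mpr hdet)]
    exact le_mul_of_one_le_right hS.det_nonneg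
      (one_le_det_one_add_of_posSemidef (hS.inv.mul_mul_conjTranspose_same Y))

lemma det_fromBlocks_le_of_posSemidef {A : Matrix m m 𝕜} {B : Matrix m n 𝕜} {D : Matrix n n 𝕜}
    (hM : (fromBlocks A B Bᴴ D).PosSemidef) :
    (fromBlocks A B Bᴴ D).det ≤ A.det * D.det := by
  have hA : A.PosSemidef := hM.submatrix Sum.inl
  have hD : D.PosSemidef := hM.submatrix Sum.inr
  by_cases hdet : (fromBlocks A B Bᴴ D).det = 0
  · exact hdet ▸ mul_nonneg hA.det_nonneg hD.det_nonneg
  · have hA' : A.PosDef := (hM.posDef_iff_det_ne_zero.mpr hdet).submatrix Sum.inl_injective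
    let := hA'.isUnit.invertible
    have hSchur : (D - Bᴴ * A⁻¹ * B).PosSemidef := (PosDef.fromBlocks₁₁ B D hA').mp hM
    have hSchur_le : (D - Bᴴ * A⁻¹ * B).det ≤ D.det := by
      simpa only [sub_add_cancel] using
        det_le_det_add_of_posSemidef hSchur (hA.inv.conjTranspose_mul_mul_same B)
    rw [det_fromBlocks₁₁, invOf_eq_nonsing_inv]
    exact mul_le_mul_of_nonneg_left hSchur_le hA.det_nonneg

theorem det_gram_fromRows_le_general (A : Matrix m k 𝕜) (B : Matrix n k 𝕜) :
    (fromRows A B * (fromRows A B)ᴴ).det ≤ (A * Aᴴ).det * (B * Bᴴ).det := by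
  have hblocks : fromRows A B * (fromRows A B)ᴴ =
      fromBlocks (A * Aᴴ) (A * Bᴴ) (A * Bᴴ)ᴴ (B * Bᴴ) := by
    rw [conjTranspose_fromRows_eq_fromCols_conjTranspose, fromRows_mul_fromCols,
      conjTranspose_mul, conjTranspose_conjTranspose]
  rw [hblocks]
  exact det_fromBlocks_le_of_posSemidef (hblocks ▸ posSemidef_self_mul_conjTranspose _)

end

/-- If `C` is obtained by stacking the real matrix `A` (with `u` rows) on top of the
real matrix `B` (with `w` rows), then `det(C·Cᵀ) ≤ det(A·Aᵀ)·det(B·Bᵀ)`. -/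
theorem det_gram_fromRows_le (u w n : ℕ)
    (A : Matrix (Fin u) (Fin n) ℝ) (B : Matrix (Fin w) (Fin n) ℝ)
    (C : Matrix (Fin u ⊕ Fin w) (Fin n) ℝ) (hC : C = Matrix.fromRows A B) :
    (C * Cᵀ).det ≤ (A * Aᵀ).det * (B * Bᵀ).det := by
  subst hC
  simpa only [conjTranspose_eq_transpose_of_trivial] using det_gram_fromRows_le_general A B
end

section
/- Let k ≥ 1 and for i = 1, …, k let A_i be a u_i×n real matrix. Let C be the (u₁+⋯+u_k)×n matrix obtained by stacking A₁, A₂, …, A_k vertically in this order. Then det(C·Cᵀ) ≤ ∏_{i=1}^{k} det(A_i·A_iᵀ). -/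
open Matrix

/-!
Fischer's inequality. The function `log det` is concave on positive definite matrices, so its
graph lies below its tangent at any `D`: `log det M ≤ log det D + tr (D⁻¹ M) - N`, where `N` is
the size of the matrices. If `D` is the block diagonal part of `M`, then `D⁻¹` is block diagonal,
so `tr (D⁻¹ M)` only involves the diagonal blocks of `M` and equals `tr (D⁻¹ D) = N`; hence
`det M ≤ det D`. The diagonal blocks of the Gram matrix of a stack are the Gram matrices of the
pieces.
-/

section BlockDiagonal

variable {ι R : Type*} [Fintype ι] [DecidableEq ι] {m n : ι → Type*} [∀ i, Fintype (m i)]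

lemma det_blockDiagonal' [CommRing R] [∀ i, DecidableEq (m i)]
    (X : ∀ i, Matrix (m i) (m i) R) : (blockDiagonal' X).det = ∏ i, (X i).det := by
  let : LinearOrder ι := LinearOrder.lift' (Fintype.equivFin ι) (Fintype.equivFin ι).injective
  rw [(blockTriangular_blockDiagonal' X).det_fintype]
  refine Finset.prod_congr rfl fun i _ ↦ ?_
  rw [← det_submatrix_equiv_self (Equiv.sigmaSubtype i).symm]
  congr 1
  ext a b
  exact blockDiagonal'_apply_eq X i a b

lemma inv_blockDiagonal' [CommRing R] [∀ i, DecidableEq (m i)]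
    {X : ∀ i, Matrix (m i) (m i) R} (hX : ∀ i, IsUnit (X i)) :
    (blockDiagonal' X)⁻¹ = blockDiagonal' fun i ↦ (X i)⁻¹ := by
  refine inv_eq_right_inv ?_
  rw [← blockDiagonal'_mul, ← blockDiagonal'_one]
  congr 1
  ext1 i
  exact mul_nonsing_inv _ ((isUnit_iff_isUnit_det _).1 (hX i))

lemma trace_blockDiagonal'_mul [NonUnitalNonAssocSemiring R] [∀ i, Fintype (n i)]
    (X : ∀ i, Matrix (m i) (n i) R) (M : Matrix (Σ i, n i) (Σ i, m i) R) :
    (blockDiagonal' X * M).trace = ∑ i, (X i * blockDiag' M i).trace := by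
  simp only [trace, diag_apply, mul_apply, Fintype.sum_sigma, blockDiag'_apply]
  refine Finset.sum_congr rfl fun i _ ↦ Finset.sum_congr rfl fun a _ ↦ ?_
  rw [Finset.sum_eq_single_of_mem i (Finset.mem_univ i)]
  · simp only [blockDiagonal'_apply_eq]
  · intro j _ hji
    simp only [blockDiagonal'_apply_ne X _ _ hji.symm, zero_mul, Finset.sum_const_zero]

end BlockDiagonal

section RCLike

open scoped ComplexOrder

variable {𝕜 : Type*} [RCLike 𝕜]

section PosSemidef

variable {m : Type*} [Fintype m]

open scoped MatrixOrder Matrix.Norms.L2Operator in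
lemma exists_eq_conjTranspose_mul_self_of_posSemidef {M : Matrix m m 𝕜} (hM : M.PosSemidef) :
    ∃ B : Matrix m m 𝕜, M = Bᴴ * B := by
  classical
  exact CStarAlgebra.nonneg_iff_eq_star_mul_self.mp hM.nonneg

variable [DecidableEq m]

lemma det_le_exp_trace_sub_card {M : Matrix m m 𝕜} (hM : M.PosSemidef) :
    M.det ≤ (Real.exp (RCLike.re M.trace - Fintype.card m) : 𝕜) := by
  have eigenvalue_le (i : m) : hM.1.eigenvalues i ≤ Real.exp (hM.1.eigenvalues i - 1) := by
    linarith [Real.add_one_le_exp (hM.1.eigenvalues i - 1)]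
  have re_trace : RCLike.re M.trace = ∑ i, hM.1.eigenvalues i := by
    rw [hM.1.trace_eq_sum_eigenvalues, ← RCLike.ofReal_sum, RCLike.ofReal_re]
  rw [hM.1.det_eq_prod_eigenvalues, ← RCLike.ofReal_prod, RCLike.ofReal_le_ofReal]
  calc ∏ i, hM.1.eigenvalues i
    _ ≤ ∏ i, Real.exp (hM.1.eigenvalues i - 1) :=
      Finset.prod_le_prod (fun i _ ↦ hM.eigenvalues_nonneg i) fun i _ ↦ eigenvalue_le i
    _ = Real.exp (RCLike.re M.trace - Fintype.card m) := by
      rw [← Real.exp_sum, Finset.sum_sub_distrib, re_trace]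
      simp

lemma det_le_det_mul_exp_trace_inv_mul_sub_card {D M : Matrix m m 𝕜} (hD : D.PosDef)
    (hM : M.PosSemidef) :
    M.det ≤ D.det * (Real.exp (RCLike.re (D⁻¹ * M).trace - Fintype.card m) : 𝕜) := by
  have det_D_pos := hD.det_pos
  obtain ⟨B, rfl⟩ := exists_eq_conjTranspose_mul_self_of_posSemidef hD.posSemidef
  have isUnit_det_B : IsUnit B.det := by
    rw [det_mul] at det_D_pos
    exact (right_ne_zero_of_mul det_D_pos.ne').isUnit
  have det_M : M.det = (Bᴴ * B).det * ((B⁻¹)ᴴ * M * B⁻¹).det := by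
    have isUnit_det_Bstar : IsUnit Bᴴ.det := by
      simpa only [det_conjTranspose] using isUnit_det_B.star
    have conj_eq : Bᴴ * ((B⁻¹)ᴴ * M * B⁻¹) * B = M := by
      rw [conjTranspose_nonsing_inv, Matrix.mul_assoc,
        nonsing_inv_mul_cancel_right _ _ isUnit_det_B,
        mul_nonsing_inv_cancel_left _ _ isUnit_det_Bstar]
    nth_rewrite 1 [← conj_eq]
    simp only [det_mul]
    ring
  have trace_conj : ((B⁻¹)ᴴ * M * B⁻¹).trace = ((Bᴴ * B)⁻¹ * M).trace := by
    rw [trace_mul_comm, ← Matrix.mul_assoc, Matrix.mul_inv_rev, conjTranspose_nonsing_inv]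
  rw [det_M, ← trace_conj]
  exact mul_le_mul_of_nonneg_left
    (det_le_exp_trace_sub_card (hM.conjTranspose_mul_mul_same B⁻¹)) det_D_pos.le

end PosSemidef

lemma posDef_blockDiagonal' {ι : Type*} [Finite ι] [DecidableEq ι] {m : ι → Type*}
    [∀ i, Finite (m i)] {X : ∀ i, Matrix (m i) (m i) 𝕜} (hX : ∀ i, (X i).PosDef) :
    (blockDiagonal' X).PosDef := by
  classical
  have := Fintype.ofFinite ι
  have (i : ι) := Fintype.ofFinite (m i)
  have posSemidef : (blockDiagonal' X).PosSemidef := by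
    choose B hB using fun i ↦ exists_eq_conjTranspose_mul_self_of_posSemidef (hX i).posSemidef
    rw [funext hB, blockDiagonal'_mul, ← blockDiagonal'_conjTranspose]
    exact posSemidef_conjTranspose_mul_self _
  rw [posSemidef.posDef_iff_det_ne_zero, det_blockDiagonal']
  exact Finset.prod_ne_zero_iff.2 fun i _ ↦ (hX i).det_pos.ne'

section Fischer

variable {ι : Type*} [Fintype ι] [DecidableEq ι] {m : ι → Type*} [∀ i, Fintype (m i)]
  [∀ i, DecidableEq (m i)]

lemma det_le_prod_det_blockDiag'_of_posDef {M : Matrix (Σ i, m i) (Σ i, m i) 𝕜} (hM : M.PosDef) :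
    M.det ≤ ∏ i, (blockDiag' M i).det := by
  have posDef_block (i : ι) : (blockDiag' M i).PosDef := hM.submatrix sigma_mk_injective
  have trace_inv_mul :
      ((blockDiagonal' (blockDiag' M))⁻¹ * M).trace = Fintype.card (Σ i, m i) := by
    rw [inv_blockDiagonal' fun i ↦ (posDef_block i).isUnit, trace_blockDiagonal'_mul]
    have inv_mul_block (i : ι) : (blockDiag' M i)⁻¹ * blockDiag' M i = 1 :=
      nonsing_inv_mul _ (posDef_block i).det_pos.ne'.isUnit
    simp only [inv_mul_block, trace_one, Fintype.card_sigma, Nat.cast_sum]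
  have tangent := det_le_det_mul_exp_trace_inv_mul_sub_card
    (posDef_blockDiagonal' posDef_block) hM.posSemidef
  rwa [trace_inv_mul, RCLike.natCast_re, sub_self, Real.exp_zero, RCLike.ofReal_one, mul_one,
    det_blockDiagonal'] at tangent

lemma det_le_prod_det_blockDiag' {M : Matrix (Σ i, m i) (Σ i, m i) 𝕜} (hM : M.PosSemidef) :
    M.det ≤ ∏ i, (blockDiag' M i).det := by
  by_cases det_M : M.det = 0
  · rw [det_M]
    exact Finset.prod_nonneg fun i _ ↦ (hM.submatrix (Sigma.mk i)).det_nonneg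
  · exact det_le_prod_det_blockDiag'_of_posDef (hM.posDef_iff_det_ne_zero.2 det_M)

theorem det_gram_stack_le_general {n : Type*} [Fintype n] (A : ∀ i, Matrix (m i) n 𝕜)
    (C : Matrix (Σ i, m i) n 𝕜) (hC : ∀ q j, C q j = A q.1 q.2 j) :
    (C * Cᴴ).det ≤ ∏ i, (A i * (A i)ᴴ).det := by
  have blockDiag'_gram (i : ι) : blockDiag' (C * Cᴴ) i = A i * (A i)ᴴ := by
    ext a b
    simp only [blockDiag'_apply, mul_apply, conjTranspose_apply, hC]
  simpa only [blockDiag'_gram] using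
    det_le_prod_det_blockDiag' (posSemidef_self_mul_conjTranspose C)

end Fischer

end RCLike

/-- If `C` is obtained by stacking the real matrices `A 1, …, A k` (with `u i` rows each)
vertically, then `det(C·Cᵀ) ≤ ∏ i, det(A i · (A i)ᵀ)`. -/
theorem det_gram_stack_le (k n : ℕ) (hk : 1 ≤ k) (u : Fin k → ℕ)
    (A : ∀ i : Fin k, Matrix (Fin (u i)) (Fin n) ℝ)
    (C : Matrix ((i : Fin k) × Fin (u i)) (Fin n) ℝ)
    (hC : ∀ (q : (i : Fin k) × Fin (u i)) (j : Fin n), C q j = A q.1 q.2 j) :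
    (C * Cᵀ).det ≤ ∏ i, (A i * (A i)ᵀ).det := by
  simpa only [conjTranspose_eq_transpose_of_trivial] using det_gram_stack_le_general A C hC
end

section
/- Let p ≥ 5 be a prime, let m ≥ 1, and let a₁, …, a_m ∈ 𝔽_p be nonzero elements with a_i ≠ a_j and a_i ≠ −a_j for all i ≠ j. Let M be an m×m matrix with integer entries such that every row i of M satisfies one of the following: (type 1) M_{ii} = 3, there is exactly one index j ≠ i with M_{ij} ∈ {1, −1}, and all other entries of row i are 0; or (type 2) M_{ii} = 2, there are at most two indices j ≠ i with M_{ij} ∈ {1, −1}, and all other entries of row i are 0. Suppose that ∑_{j=1}^{m} M_{ij}·a_j = 0 in 𝔽_p for every i = 1, …, m. Let r be the rank of M as a matrix over ℚ. Then every r×r minor of M (the determinant of any r×r submatrix of M obtained by choosing r rows and r columns) is divisible by p. -/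
open Matrix

/-!
Suppose `D = det (M.submatrix f g)` is nonzero modulo `p`. By Cramer's rule, a lift of `D • a`
to `ℤ` can be corrected by multiples of `p` to an integer vector `x` that is killed by the
rows chosen by `f`; since their number is the rank of `M`, these rows span the others and `M x = 0`.
The entries of `x` inherit from `a` that their absolute values are distinct. But in the row of the
entry of largest absolute value the diagonal term outweighs the sum of all the others, because `M`
is weakly diagonally dominant, so `x = 0`, although it reduces to `D • a ≠ 0` modulo `p`.
-/

section Cramer

variable {k m n R S K : Type*} [Fintype k] [DecidableEq k] [Fintype n]
  [CommRing R] [CommRing S] [Field K]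

lemma exists_submatrix_mul_eq_det_smul_one (M : Matrix m n R) (f : k → m) (g : k → n) :
    ∃ C : Matrix n k R, M.submatrix f id * C = (M.submatrix f g).det • (1 : Matrix k k R) := by
  classical
  refine ⟨(1 : Matrix n n R).submatrix id g * (M.submatrix f g).adjugate, ?_⟩
  have hcols : M.submatrix f id * (1 : Matrix n n R).submatrix id g = M.submatrix f g := by
    rw [← submatrix_mul _ _ f id g Function.bijective_id, Matrix.mul_one]
  rw [← Matrix.mul_assoc, hcols, mul_adjugate]

lemma mulVec_eq_zero_of_comp_eq_zero_of_det_ne_zero {A : Matrix m n K} {f : k → m} {g : k → n}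
    (hrank : A.rank = Fintype.card k) (hdet : (A.submatrix f g).det ≠ 0) {w : n → K}
    (hw : (A *ᵥ w) ∘ f = 0) : A *ᵥ w = 0 := by
  let restrict : LinearMap.range A.mulVecLin →ₗ[K] k → K :=
    LinearMap.funLeft K K f ∘ₗ Submodule.subtype _
  have restrict_surjective : Function.Surjective restrict := by
    intro v
    obtain ⟨C, hC⟩ := exists_submatrix_mul_eq_det_smul_one A f g
    refine ⟨⟨A *ᵥ (C *ᵥ ((A.submatrix f g).det⁻¹ • v)), LinearMap.mem_range_self A.mulVecLin _⟩, ?_⟩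
    change A.submatrix f id *ᵥ (C *ᵥ ((A.submatrix f g).det⁻¹ • v)) = v
    rw [mulVec_mulVec, hC, smul_mulVec, one_mulVec, smul_inv_smul₀ hdet]
  have restrict_injective : Function.Injective restrict :=
    (LinearMap.injective_iff_surjective_of_finrank_eq_finrank
      (by rw [Module.finrank_fintype_fun_eq_card, ← hrank, Matrix.rank])).2 restrict_surjective
  have hAw : (⟨A *ᵥ w, LinearMap.mem_range_self A.mulVecLin w⟩ :
      LinearMap.range A.mulVecLin) = 0 :=
    restrict_injective (hw.trans (map_zero restrict).symm)
  exact congrArg Subtype.val hAw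

lemma mulVec_eq_zero_of_comp_eq_zero_of_rank_map {φ : R →+* K} (hφ : Function.Injective φ)
    {M : Matrix m n R} {f : k → m} {g : k → n} (hrank : (M.map φ).rank = Fintype.card k)
    (hdet : (M.submatrix f g).det ≠ 0) {x : n → R} (hx : (M *ᵥ x) ∘ f = 0) : M *ᵥ x = 0 := by
  have hφM : ∀ i, φ ((M *ᵥ x) i) = (M.map φ *ᵥ (φ ∘ x)) i := φ.map_mulVec M x
  have hφdet : ((M.map φ).submatrix f g).det ≠ 0 := by
    rwa [submatrix_map, ← RingHom.mapMatrix_apply, ← RingHom.map_det, map_ne_zero_iff φ hφ]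
  have hφx : (M.map φ *ᵥ (φ ∘ x)) ∘ f = 0 := by
    ext l
    have hl : (M *ᵥ x) (f l) = 0 := congrFun hx l
    rw [Function.comp_apply, ← hφM, hl, map_zero, Pi.zero_apply]
  ext i
  apply hφ
  rw [hφM, mulVec_eq_zero_of_comp_eq_zero_of_det_ne_zero hrank hφdet hφx, Pi.zero_apply,
    Pi.zero_apply, map_zero]

lemma exists_mulVec_eq_zero_and_comp_eq_det_smul {φ : R →+* K} (hφ : Function.Injective φ)
    {ψ : R →+* S} (hψ : Function.Surjective ψ) {M : Matrix m n R}
    (hrank : (M.map φ).rank = Fintype.card k) (f : k → m) (g : k → n) {a : n → S}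
    (ha : M.map ψ *ᵥ a = 0) :
    ∃ x : n → R, M *ᵥ x = 0 ∧ ψ ∘ x = ψ (M.submatrix f g).det • a := by
  by_cases hdet : (M.submatrix f g).det = 0
  · exact ⟨0, mulVec_zero M, by ext; simp [hdet]⟩
  obtain ⟨b, rfl⟩ : ∃ b : n → R, ψ ∘ b = a := hψ.comp_left a
  obtain ⟨C, hC⟩ := exists_submatrix_mul_eq_det_smul_one M f g
  have hMb : ψ ∘ (M *ᵥ b) = 0 := by
    rw [← ha]
    exact funext (ψ.map_mulVec M b)
  have hCMb : ψ ∘ (C *ᵥ ((M *ᵥ b) ∘ f)) = 0 := by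
    ext j
    rw [Function.comp_apply, RingHom.map_mulVec, ← Function.comp_assoc, hMb]
    exact congrFun (mulVec_zero (C.map ψ)) j
  refine ⟨(M.submatrix f g).det • b - C *ᵥ ((M *ᵥ b) ∘ f), ?_, ?_⟩
  · apply mulVec_eq_zero_of_comp_eq_zero_of_rank_map hφ hrank hdet
    change M.submatrix f id *ᵥ ((M.submatrix f g).det • b - C *ᵥ ((M *ᵥ b) ∘ f)) = 0
    rw [mulVec_sub, mulVec_mulVec, hC, mulVec_smul, smul_mulVec, one_mulVec]
    exact sub_self _
  · ext j
    have hj : ψ ((C *ᵥ ((M *ᵥ b) ∘ f)) j) = 0 := congrFun hCMb j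
    simp [hj]

end Cramer

section DiagonallyDominant

variable {n R : Type*} [Fintype n] [DecidableEq n]
  [CommRing R] [LinearOrder R] [IsStrictOrderedRing R]

lemma sum_abs_le_card_of_eq_zero_off {ι : Type*} {s t : Finset ι} {v : ι → R}
    (hle : ∀ j ∈ t, |v j| ≤ 1) (hzero : ∀ j ∈ t, j ∉ s → v j = 0) :
    ∑ j ∈ t, |v j| ≤ s.card := by
  classical
  calc ∑ j ∈ t, |v j| ≤ ∑ j ∈ t, if j ∈ s then 1 else 0 := by
        refine Finset.sum_le_sum fun j hj => ?_
        split_ifs with hjs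
        · exact hle j hj
        · rw [hzero j hj hjs, abs_zero]
    _ = ((t ∩ s).card : R) := by rw [Finset.sum_ite_mem, Finset.sum_const, nsmul_one]
    _ ≤ s.card := by exact_mod_cast Finset.card_le_card Finset.inter_subset_right

lemma eq_zero_of_mulVec_eq_zero_of_injective_abs {M : Matrix n n R} (hdiag : ∀ i, M i i ≠ 0)
    (hdom : ∀ i, ∑ j ∈ Finset.univ.erase i, |M i j| ≤ |M i i|) {x : n → R}
    (hx : Function.Injective fun i => |x i|) (hMx : M *ᵥ x = 0) : x = 0 := by
  by_contra hx0
  obtain ⟨i₀, hi₀⟩ := Function.ne_iff.1 hx0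
  have : Nonempty n := ⟨i₀⟩
  obtain ⟨i, hmax⟩ := Finite.exists_max fun i => |x i|
  have hxi : 0 < |x i| := (abs_pos.2 hi₀).trans_le (hmax i₀)
  have hlt : ∀ j ≠ i, |x j| < |x i| := fun j hj => (hmax j).lt_of_ne (hx.ne hj)
  have hrow : M i i * x i = -∑ j ∈ Finset.univ.erase i, M i j * x j :=
    eq_neg_of_add_eq_zero_left
      ((Finset.add_sum_erase _ (fun j => M i j * x j) (Finset.mem_univ i)).trans (congrFun hMx i))
  by_cases hoff : ∀ j ∈ Finset.univ.erase i, M i j = 0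
  · rw [Finset.sum_eq_zero fun j hj => by rw [hoff j hj, zero_mul], neg_zero] at hrow
    exact mul_ne_zero (hdiag i) (abs_pos.1 hxi) hrow
  · push Not at hoff
    obtain ⟨j₀, hj₀, hMj₀⟩ := hoff
    refine lt_irrefl (|M i i| * |x i|) ?_
    calc |M i i| * |x i| = |∑ j ∈ Finset.univ.erase i, M i j * x j| := by
          rw [← abs_mul, hrow, abs_neg]
      _ ≤ ∑ j ∈ Finset.univ.erase i, |M i j * x j| := Finset.abs_sum_le_sum_abs _ _
      _ = ∑ j ∈ Finset.univ.erase i, |M i j| * |x j| := by simp only [abs_mul]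
      _ < ∑ j ∈ Finset.univ.erase i, |M i j| * |x i| :=
          Finset.sum_lt_sum (fun j _ => mul_le_mul_of_nonneg_left (hmax j) (abs_nonneg _))
            ⟨j₀, hj₀, mul_lt_mul_of_pos_left (hlt j₀ (Finset.ne_of_mem_erase hj₀))
              (abs_pos.2 hMj₀)⟩
      _ = (∑ j ∈ Finset.univ.erase i, |M i j|) * |x i| := (Finset.sum_mul _ _ _).symm
      _ ≤ |M i i| * |x i| := mul_le_mul_of_nonneg_right (hdom i) hxi.le

end DiagonallyDominant

section RowTypes

variable {n : Type*} {v : n → ℤ} {i : n}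

/-- The vector `v` holds the coefficients of a type-1 equation `3 x_i ± x_j = 0` with `j ≠ i`. -/
def IsTypeOneRow (v : n → ℤ) (i : n) : Prop :=
  v i = 3 ∧ ∃ j, j ≠ i ∧ (v j = 1 ∨ v j = -1) ∧ ∀ k, k ≠ i → k ≠ j → v k = 0

/-- The vector `v` holds the coefficients of a type-2 equation `2 x_i ± x_j ± x_k = 0`, in which
either or both of the last two terms may be missing: `j₁ = j₂` is allowed, and so are zero
coefficients at `j₁` and `j₂`. -/
def IsTypeTwoRow (v : n → ℤ) (i : n) : Prop :=
  v i = 2 ∧ (∀ k, k ≠ i → v k = 0 ∨ v k = 1 ∨ v k = -1) ∧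
    ∃ j₁ j₂, j₁ ≠ i ∧ j₂ ≠ i ∧ ∀ k, k ≠ i → k ≠ j₁ → k ≠ j₂ → v k = 0

variable [Fintype n] [DecidableEq n]

lemma IsTypeOneRow.sum_erase_abs_le (h : IsTypeOneRow v i) :
    ∑ j ∈ Finset.univ.erase i, |v j| ≤ |v i| := by
  obtain ⟨hdiag, j, -, hj, hzero⟩ := h
  have hle : ∀ k ∈ Finset.univ.erase i, |v k| ≤ 1 := by
    intro k hk
    by_cases hkj : k = j
    · subst hkj
      rcases hj with hj | hj <;> simp [hj]
    · simp [hzero k (Finset.ne_of_mem_erase hk) hkj]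
  calc ∑ k ∈ Finset.univ.erase i, |v k| ≤ (({j} : Finset n).card : ℤ) :=
        sum_abs_le_card_of_eq_zero_off hle fun k hk hkj =>
          hzero k (Finset.ne_of_mem_erase hk) (by simpa using hkj)
    _ ≤ |v i| := by simp [hdiag]

lemma IsTypeTwoRow.sum_erase_abs_le (h : IsTypeTwoRow v i) :
    ∑ j ∈ Finset.univ.erase i, |v j| ≤ |v i| := by
  obtain ⟨hdiag, hunit, j₁, j₂, -, -, hzero⟩ := h
  have hle : ∀ k ∈ Finset.univ.erase i, |v k| ≤ 1 := by
    intro k hk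
    rcases hunit k (Finset.ne_of_mem_erase hk) with hk | hk | hk <;> simp [hk]
  calc ∑ k ∈ Finset.univ.erase i, |v k| ≤ (({j₁, j₂} : Finset n).card : ℤ) :=
        sum_abs_le_card_of_eq_zero_off hle fun k hk hkj => by
          rw [Finset.mem_insert, Finset.mem_singleton, not_or] at hkj
          exact hzero k (Finset.ne_of_mem_erase hk) hkj.1 hkj.2
    _ ≤ 2 := by exact_mod_cast Finset.card_le_two
    _ = |v i| := by simp [hdiag]

end RowTypes

theorem minor_divisible_by_p_general {p : ℕ} [Fact p.Prime] {k n : Type*} [Fintype k]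
    [DecidableEq k] [Fintype n] [DecidableEq n] {a : n → ZMod p} (ha0 : a ≠ 0)
    (ha : ∀ i j, i ≠ j → a i ≠ a j ∧ a i ≠ -a j) {M : Matrix n n ℤ}
    (hdiag : ∀ i, M i i ≠ 0) (hdom : ∀ i, ∑ j ∈ Finset.univ.erase i, |M i j| ≤ |M i i|)
    (hMa : M.map (Int.castRingHom (ZMod p)) *ᵥ a = 0)
    (hrank : (M.map (Int.castRingHom ℚ)).rank = Fintype.card k) (f g : k → n) :
    (p : ℤ) ∣ (M.submatrix f g).det := by
  obtain ⟨x, hMx, hxa⟩ := exists_mulVec_eq_zero_and_comp_eq_det_smul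
    (Int.castRingHom ℚ).injective_int (ZMod.ringHom_surjective (Int.castRingHom (ZMod p)))
    hrank f g hMa
  by_contra hdvd
  have hdet : ((M.submatrix f g).det : ZMod p) ≠ 0 := by
    rwa [Ne, ZMod.intCast_zmod_eq_zero_iff_dvd]
  have hx : ∀ i, (x i : ZMod p) = (M.submatrix f g).det * a i := congrFun hxa
  have habs : Function.Injective fun i => |x i| := by
    intro i j hij
    by_contra hne
    rcases abs_eq_abs.1 hij with h | h
    · exact (ha i j hne).1 (mul_left_cancel₀ hdet (by rw [← hx, ← hx, h]))
    · exact (ha i j hne).2 (mul_left_cancel₀ hdet (by rw [mul_neg, ← hx, ← hx, h, Int.cast_neg]))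
  have hx0 : x = 0 := eq_zero_of_mulVec_eq_zero_of_injective_abs hdiag hdom habs hMx
  exact ha0 (funext fun i => (mul_eq_zero.1 ((hx i).symm.trans (by simp [hx0]))).resolve_left hdet)

/-- Smith-Normal-Form divisibility theorem: if the rows of the integer matrix `M` are
coefficient vectors of type-1 equations (`3x_i ± x_j = 0`) or type-2 equations
(`2x_i ± x_j (± x_k) = 0`), and `a₁, …, a_m` are nonzero elements of `𝔽_p`, pairwise
distinct up to sign, satisfying `M·a = 0` over `𝔽_p`, then every `r×r` minor of `M`
is divisible by `p`, where `r` is the rank of `M` over `ℚ`. -/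
theorem minor_divisible_by_p (p : ℕ) (hp : p.Prime) (hp5 : 5 ≤ p)
    (m : ℕ) (hm : 1 ≤ m)
    (a : Fin m → ZMod p) (ha0 : ∀ i, a i ≠ 0)
    (ha : ∀ i j, i ≠ j → a i ≠ a j ∧ a i ≠ -a j)
    (M : Matrix (Fin m) (Fin m) ℤ)
    (hrow : ∀ i : Fin m,
      (M i i = 3 ∧ ∃ j, j ≠ i ∧ (M i j = 1 ∨ M i j = -1) ∧
        ∀ k, k ≠ i → k ≠ j → M i k = 0) ∨
      (M i i = 2 ∧ (∀ k, k ≠ i → M i k = 0 ∨ M i k = 1 ∨ M i k = -1) ∧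
        ∃ j₁ j₂, j₁ ≠ i ∧ j₂ ≠ i ∧ ∀ k, k ≠ i → k ≠ j₁ → k ≠ j₂ → M i k = 0))
    (hEq : ∀ i : Fin m, ∑ j, (M i j : ZMod p) * a j = 0)
    (r : ℕ) (hr : r = (M.map (fun x => (x : ℚ))).rank)
    (f g : Fin r → Fin m) (hf : Function.Injective f) (hg : Function.Injective g) :
    (p : ℤ) ∣ (M.submatrix f g).det := by
  have : Fact p.Prime := ⟨hp⟩
  have hrowType : ∀ i, IsTypeOneRow (M i) i ∨ IsTypeTwoRow (M i) i := hrow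
  exact minor_divisible_by_p_general (Function.ne_iff.2 ⟨⟨0, hm⟩, ha0 _⟩) ha
    (fun i => by rcases hrowType i with h | h <;> simp [h.1])
    (fun i => (hrowType i).elim (·.sum_erase_abs_le) (·.sum_erase_abs_le)) (funext hEq)
    (by simpa using hr.symm) f g
end

section
/- Let p be a prime, let m ≥ 1 with 3^m ≤ p, and let a₁, …, a_m ∈ 𝔽_p be nonzero elements with a_i ≠ a_j and a_i ≠ −a_j for all i ≠ j. Let I ⊆ {1, …, m}, let σ : I → {1, …, m}, and let ε : I → {1, −1} be such that 3·a_i + ε(i)·a_{σ(i)} = 0 in 𝔽_p for every i ∈ I. Then the directed graph on {1, …, m} with edge set {(i, σ(i)) : i ∈ I} contains no directed cycle; that is, there exist no k ≥ 1 and pairwise distinct v₁, …, v_k ∈ I with σ(v_j) = v_{j+1} for j = 1, …, k−1 and σ(v_k) = v₁. -/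
/-!
Each edge `(i, σ i)` multiplies the label `a i` by `±c`, so going once around a cycle of length
`k` gives `±c ^ k • x = x` for some label `x` of odd order `n ≥ c ^ k`. Hence `n` divides
`±c ^ k - 1`. As `c` is odd, this number is even, and `n` being odd it is a multiple of `2 * n`.
But it is nonzero of absolute value at most `c ^ k + 1 < 2 * n`.
-/

theorem not_dvd_unit_mul_sub_one {n b : ℕ} (hn : Odd n) (hb : Odd b) (hb1 : 1 < b) (hbn : b ≤ n)
    (u : ℤˣ) : ¬ (n : ℤ) ∣ u * b - 1 := by
  intro hdvd
  have hcoprime : IsCoprime (2 : ℤ) n :=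
    Nat.isCoprime_iff_coprime.mpr (Nat.coprime_two_left.mpr hn)
  have hu : u = 1 ∨ u = -1 := Int.units_eq_one_or u
  have htwo : (2 : ℤ) ∣ u * b - 1 := by
    have hu_odd : Odd (u : ℤ) := by rcases hu with rfl | rfl <;> decide
    exact ((hu_odd.mul hb.natCast).sub_odd odd_one).two_dvd
  have hlt : |(u * b - 1 : ℤ)| < 2 * n := by
    rw [abs_lt]
    rcases hu with rfl | rfl <;> constructor <;> push_cast <;> lia
  have hzero : (u * b - 1 : ℤ) = 0 :=
    Int.eq_zero_of_abs_lt_dvd (hcoprime.mul_dvd htwo hdvd) hlt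
  rcases hu with rfl | rfl <;> push_cast at hzero <;> lia

section AddGroup

variable {A V : Type*} [AddGroup A]

theorem unit_mul_zsmul_ne_self {x : A} {b : ℕ} (hx : Odd (addOrderOf x)) (hb : Odd b)
    (hb1 : 1 < b) (hbx : b ≤ addOrderOf x) (u : ℤˣ) : (u * b : ℤ) • x ≠ x := by
  intro hfix
  refine not_dvd_unit_mul_sub_one hx hb hb1 hbx u (addOrderOf_dvd_iff_zsmul_eq_zero.mpr ?_)
  rw [sub_zsmul, one_zsmul, hfix, add_neg_cancel]

theorem eq_unit_mul_zsmul_of_nsmul_add_zsmul_eq_zero {c : ℕ} {u : ℤˣ} {x y : A}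
    (h : c • x + (u : ℤ) • y = 0) : y = ((-u : ℤˣ) * c : ℤ) • x := by
  have huy : (u : ℤ) • y = -(c • x) := (neg_eq_of_add_eq_zero_right h).symm
  calc y = (u * u : ℤ) • y := by rw [Int.units_coe_mul_self, one_zsmul]
    _ = (u : ℤ) • -(c • x) := by rw [mul_zsmul, huy]
    _ = ((-u : ℤˣ) * c : ℤ) • x := by
      rw [Units.val_neg, neg_mul, neg_zsmul, mul_zsmul, natCast_zsmul, zsmul_neg]

theorem exists_unit_iterate_eq_zsmul {c : ℕ} {a : V → A} {σ : V → V} {I : Set V}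
    (hstep : ∀ i ∈ I, ∃ u : ℤˣ, a (σ i) = (u * c : ℤ) • a i) {x : V} {k : ℕ}
    (horbit : ∀ j < k, σ^[j] x ∈ I) :
    ∃ u : ℤˣ, a (σ^[k] x) = (u * (c ^ k : ℕ) : ℤ) • a x := by
  induction k with
  | zero => exact ⟨1, by simp⟩
  | succ k ih =>
    obtain ⟨u, hu⟩ := ih fun j hj => horbit j (hj.trans k.lt_succ_self)
    obtain ⟨w, hw⟩ := hstep _ (horbit k k.lt_succ_self)
    refine ⟨w * u, ?_⟩
    rw [Function.iterate_succ_apply', hw, hu, ← mul_zsmul]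
    congr 1
    push_cast
    ring

end AddGroup

theorem iterate_eq_of_forall_succ {V : Type*} {σ : V → V} {v : ℕ → V} {k : ℕ}
    (hv : ∀ j, j + 1 < k → σ (v j) = v (j + 1)) {j : ℕ} (hj : j < k) : σ^[j] (v 0) = v j := by
  induction j with
  | zero => rfl
  | succ j ih => rw [Function.iterate_succ_apply', ih (j.lt_succ_self.trans hj), hv j hj]

theorem type_one_graph_acyclic_general {A V : Type*} [AddGroup A] [Fintype V]
    {c : ℕ} (hc : Odd c) (hc1 : 1 < c) (a : V → A) (I : Set V)
    (hodd : ∀ i ∈ I, Odd (addOrderOf (a i)))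
    (horder : ∀ i ∈ I, c ^ Fintype.card V ≤ addOrderOf (a i))
    (σ : V → V) (ε : V → ℤ) (hε : ∀ i ∈ I, IsUnit (ε i))
    (heq : ∀ i ∈ I, c • a i + ε i • a (σ i) = 0) :
    ¬ ∃ (k : ℕ) (v : ℕ → V), 1 ≤ k ∧
        (∀ i < k, v i ∈ I) ∧
        (∀ i < k, ∀ j < k, v i = v j → i = j) ∧
        (∀ j, j + 1 < k → σ (v j) = v (j + 1)) ∧
        σ (v (k - 1)) = v 0 := by
  rintro ⟨k, v, hk, hvI, hinj, hv, hclose⟩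
  have hk_card : k ≤ Fintype.card V := by
    simpa using Fintype.card_le_of_injective (fun i : Fin k => v i)
      fun i j hij => Fin.ext (hinj i i.2 j j.2 hij)
  have hstep : ∀ i ∈ I, ∃ u : ℤˣ, a (σ i) = (u * c : ℤ) • a i := fun i hi => by
    obtain ⟨u, hu⟩ := hε i hi
    exact ⟨-u, eq_unit_mul_zsmul_of_nsmul_add_zsmul_eq_zero (hu ▸ heq i hi)⟩
  have horbit : ∀ j < k, σ^[j] (v 0) ∈ I := fun j hj =>
    iterate_eq_of_forall_succ hv hj ▸ hvI j hj
  have hperiod : σ^[k] (v 0) = v 0 := by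
    rw [← Nat.sub_add_cancel hk, Function.iterate_succ_apply',
      iterate_eq_of_forall_succ hv (Nat.sub_one_lt_of_lt hk), hclose]
  obtain ⟨u, hu⟩ := exists_unit_iterate_eq_zsmul hstep horbit
  rw [hperiod] at hu
  have hv0 : v 0 ∈ I := hvI 0 hk
  exact unit_mul_zsmul_ne_self (hodd _ hv0) hc.pow (Nat.one_lt_pow (Nat.ne_of_gt hk) hc1)
    ((Nat.pow_le_pow_right hc.pos hk_card).trans (horder _ hv0)) u hu.symm

/-- The directed graph with edges `(i, σ(i))`, `i ∈ I`, arising from type-1 equations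
`3a_i + ε(i)·a_{σ(i)} = 0` over `𝔽_p` (with `3^m ≤ p`, the `a_i` nonzero and pairwise
distinct up to sign) contains no directed cycle. -/
theorem type_one_graph_acyclic (p : ℕ) (hp : p.Prime)
    (m : ℕ) (hm : 1 ≤ m) (hpm : 3 ^ m ≤ p)
    (a : Fin m → ZMod p) (ha0 : ∀ i, a i ≠ 0)
    (ha : ∀ i j, i ≠ j → a i ≠ a j ∧ a i ≠ -a j)
    (I : Set (Fin m)) (σ : Fin m → Fin m) (ε : Fin m → ℤ)
    (hε : ∀ i ∈ I, ε i = 1 ∨ ε i = -1)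
    (heq : ∀ i ∈ I, 3 * a i + (ε i : ZMod p) * a (σ i) = 0) :
    ¬ ∃ (k : ℕ) (v : ℕ → Fin m), 1 ≤ k ∧
        (∀ i < k, v i ∈ I) ∧
        (∀ i < k, ∀ j < k, v i = v j → i = j) ∧
        (∀ j, j + 1 < k → σ (v j) = v (j + 1)) ∧
        σ (v (k - 1)) = v 0 := by
  have : Fact p.Prime := ⟨hp⟩
  have horder (i : Fin m) : addOrderOf (a i) = p := addOrderOf_eq_prime (by simp) (ha0 i)
  have hp_odd : Odd p := hp.odd_of_ne_two (by have := Nat.le_self_pow (Nat.ne_of_gt hm) 3; lia)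
  exact type_one_graph_acyclic_general (c := 3) (by decide) (by decide) a I
    (fun i _ => (horder i).symm ▸ hp_odd) (fun i _ => by simpa [horder] using hpm) σ ε
    (fun i hi => Int.isUnit_iff.mpr (hε i hi)) (fun i hi => by simpa using heq i hi)
end

section
/- Let v, m be positive integers with v + 1 ≤ m and let δ₁, …, δ_v ∈ {1, −1}. Let B be the v×m real matrix whose i-th row (for 1 ≤ i ≤ v) has entry 3 in column i, entry δ_i in column i+1, and all other entries 0. Then det(B·Bᵀ) = (9^{v+1} − 1)/8. -/
open Matrix

/-!
The Gram matrix of a bidiagonal matrix with rows `aᵢ eᵢ + bᵢ eᵢ₊₁` is tridiagonal, so its leading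
principal minors `Dₙ` satisfy the three-term recurrence
`Dₙ₊₂ = (aₙ₊₁² + bₙ₊₁²) Dₙ₊₁ - bₙ² aₙ₊₁² Dₙ`. It telescopes to `Dₙ₊₁ = bₙ² Dₙ + a₀² ⋯ aₙ²`, whose
solution `Dₙ = ∑ₖ a₀² ⋯ aₖ₋₁² bₖ² ⋯ bₙ₋₁²` is the sum of the squared maximal minors, as in the
Cauchy–Binet formula: the `k`-th one arises by deleting column `k`. For `aᵢ² = 9` and `bᵢ² = 1` it
is a geometric sum.
-/

section Tridiagonal

variable {R : Type*}

/-- The `n × n` tridiagonal matrix with diagonal `d`, superdiagonal `b` and subdiagonal `c`. The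
entries are indexed by `ℕ`, so that truncating the matrix does not change the sequences. -/
def tridiagonal [Zero R] (n : ℕ) (d b c : ℕ → R) : Matrix (Fin n) (Fin n) R :=
  of fun i j =>
    if (i : ℕ) = j then d i
    else if (j : ℕ) = i + 1 then b i
    else if (i : ℕ) = j + 1 then c j
    else 0

theorem tridiagonal_submatrix_castSucc [Zero R] (n : ℕ) (d b c : ℕ → R) :
    (tridiagonal (n + 1) d b c).submatrix Fin.castSucc Fin.castSucc = tridiagonal n d b c := by
  ext i j
  simp [tridiagonal]

variable [CommRing R]

theorem det_tridiagonal_submatrix_castSucc_succAbove (n : ℕ) (d b c : ℕ → R) :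
    ((tridiagonal (n + 2) d b c).submatrix Fin.castSucc
      (Fin.last n).castSucc.succAbove).det = b n * (tridiagonal n d b c).det := by
  have last_col (i : Fin n) :
      tridiagonal (n + 2) d b c i.castSucc.castSucc (Fin.last (n + 1)) = 0 := by
    simp only [tridiagonal, of_apply, Fin.val_castSucc, Fin.val_last]
    grind
  have last_entry : tridiagonal (n + 2) d b c (Fin.last n).castSucc (Fin.last (n + 1)) = b n := by
    simp [tridiagonal]
  have complementary_minor :
      ((tridiagonal (n + 2) d b c).submatrix Fin.castSucc
        (Fin.last n).castSucc.succAbove).submatrix Fin.castSucc Fin.castSucc =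
        tridiagonal n d b c := by
    ext i j
    simp [tridiagonal]
  rw [det_succ_column _ (Fin.last n), Fin.sum_univ_castSucc]
  simp [last_col, last_entry, complementary_minor, ← two_mul]

theorem det_tridiagonal_succ_succ (n : ℕ) (d b c : ℕ → R) :
    (tridiagonal (n + 2) d b c).det =
      d (n + 1) * (tridiagonal (n + 1) d b c).det - b n * c n * (tridiagonal n d b c).det := by
  have last_row (j : Fin n) :
      tridiagonal (n + 2) d b c (Fin.last (n + 1)) j.castSucc.castSucc = 0 := by
    simp only [tridiagonal, of_apply, Fin.val_castSucc, Fin.val_last]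
    grind
  have last_row_castSucc_last :
      tridiagonal (n + 2) d b c (Fin.last (n + 1)) (Fin.last n).castSucc = c n := by
    simp only [tridiagonal, of_apply, Fin.val_castSucc, Fin.val_last]
    grind
  have last_row_last :
      tridiagonal (n + 2) d b c (Fin.last (n + 1)) (Fin.last (n + 1)) = d (n + 1) := by
    simp [tridiagonal]
  rw [det_succ_row _ (Fin.last (n + 1)), Fin.sum_univ_castSucc, Fin.sum_univ_castSucc]
  simp only [Fin.val_last, Fin.val_castSucc, Fin.succAbove_last, last_row, last_row_castSucc_last,
    last_row_last, tridiagonal_submatrix_castSucc, det_tridiagonal_submatrix_castSucc_succAbove,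
    odd_add_one_self, Odd.neg_one_pow, Even.add_self, Even.neg_one_pow, mul_zero, zero_mul,
    Finset.sum_const_zero]
  ring

variable {x y b c : ℕ → R}

theorem det_tridiagonal_succ_of_mul_eq (hbc : ∀ i, b i * c i = y i * x (i + 1)) (n : ℕ) :
    (tridiagonal (n + 1) (x + y) b c).det =
      y n * (tridiagonal n (x + y) b c).det + ∏ i ∈ Finset.range (n + 1), x i := by
  induction n with
  | zero => simp [tridiagonal, add_comm]
  | succ n ih =>
    rw [det_tridiagonal_succ_succ, Finset.prod_range_succ, hbc, Pi.add_apply]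
    linear_combination x (n + 1) * ih

theorem det_tridiagonal_eq_sum_prod (hbc : ∀ i, b i * c i = y i * x (i + 1)) (n : ℕ) :
    (tridiagonal n (x + y) b c).det =
      ∑ k ∈ Finset.range (n + 1), ∏ i ∈ Finset.range n, if i < k then x i else y i := by
  induction n with
  | zero => simp
  | succ n ih =>
    have last_term : (∏ i ∈ Finset.range (n + 1), if i < n + 1 then x i else y i) =
        ∏ i ∈ Finset.range (n + 1), x i :=
      Finset.prod_congr rfl fun i hi => if_pos (Finset.mem_range.mp hi)
    have other_term {k : ℕ} (hk : k ∈ Finset.range (n + 1)) :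
        (∏ i ∈ Finset.range (n + 1), if i < k then x i else y i) =
          y n * ∏ i ∈ Finset.range n, if i < k then x i else y i := by
      rw [Finset.prod_range_succ, if_neg (by grind), mul_comm]
    rw [det_tridiagonal_succ_of_mul_eq hbc, ih, Finset.sum_range_succ _ (n + 1), last_term,
      Finset.sum_congr rfl fun k hk => other_term hk, Finset.mul_sum]

end Tridiagonal

section Bidiagonal

variable {R : Type*}

/-- The `v × m` bidiagonal matrix whose row `i` has entry `a i` in column `i` and `b i` in column
`i + 1`; an entry whose column does not exist is dropped. -/
def bidiagonal [Zero R] (v m : ℕ) (a b : ℕ → R) : Matrix (Fin v) (Fin m) R :=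
  of fun i j => if (j : ℕ) = i then a i else if (j : ℕ) = i + 1 then b i else 0

variable {v m : ℕ}

theorem bidiagonal_dotProduct [NonUnitalNonAssocSemiring R] (hvm : v + 1 ≤ m) (a b : ℕ → R)
    (i : Fin v) (w : Fin m → R) :
    bidiagonal v m a b i ⬝ᵥ w = a i * w ⟨i, by lia⟩ + b i * w ⟨i + 1, by lia⟩ := by
  have row_eq : bidiagonal v m a b i =
      Pi.single ⟨i, by lia⟩ (a i) + Pi.single ⟨i + 1, by lia⟩ (b i) := by
    ext j
    simp only [bidiagonal, of_apply, Pi.add_apply, Pi.single_apply, Fin.ext_iff]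
    grind
  rw [row_eq, add_dotProduct, single_dotProduct, single_dotProduct]

theorem bidiagonal_mul_transpose_bidiagonal [NonUnitalNonAssocSemiring R] (hvm : v + 1 ≤ m)
    (a b c d : ℕ → R) :
    bidiagonal v m a b * (bidiagonal v m c d)ᵀ =
      tridiagonal v (a * c + b * d) (fun i => b i * c (i + 1)) (fun i => a (i + 1) * d i) := by
  ext i k
  change bidiagonal v m a b i ⬝ᵥ bidiagonal v m c d k = _
  rw [bidiagonal_dotProduct hvm]
  simp only [bidiagonal, tridiagonal, of_apply, Pi.add_apply, Pi.mul_apply]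
  grind [mul_zero]

theorem det_bidiagonal_mul_transpose_bidiagonal [CommRing R] (hvm : v + 1 ≤ m) (a b c d : ℕ → R) :
    (bidiagonal v m a b * (bidiagonal v m c d)ᵀ).det =
      ∑ k ∈ Finset.range (v + 1), ∏ i : Fin v, if (i : ℕ) < k then a i * c i else b i * d i := by
  have offDiagonal_mul (i : ℕ) :
      b i * c (i + 1) * (a (i + 1) * d i) = (b * d) i * (a * c) (i + 1) := by
    simp only [Pi.mul_apply]
    ring
  rw [bidiagonal_mul_transpose_bidiagonal hvm, det_tridiagonal_eq_sum_prod offDiagonal_mul]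
  simp only [Finset.prod_range, Pi.mul_apply]

end Bidiagonal

theorem sum_prod_ite_val_lt {R : Type*} [CommSemiring R] (n : ℕ) (x : R) :
    (∑ k ∈ Finset.range (n + 1), ∏ i : Fin n, if (i : ℕ) < k then x else 1) =
      ∑ k ∈ Finset.range (n + 1), x ^ k := by
  refine Finset.sum_congr rfl fun k hk => ?_
  have hkn : k ≤ n := Finset.mem_range_succ_iff.mp hk
  rw [Finset.prod_ite, Finset.prod_const, Finset.prod_const_one, mul_one, Fin.card_filter_val_lt,
    min_eq_right hkn]

theorem det_gram_type_one_path_general {R : Type*} [CommRing R] (v m : ℕ) (hm : v + 1 ≤ m)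
    (a δ : Fin v → R) (B : Matrix (Fin v) (Fin m) R)
    (hB : ∀ (i : Fin v) (j : Fin m),
      B i j = if (j : ℕ) = (i : ℕ) then a i
        else if (j : ℕ) = (i : ℕ) + 1 then δ i else 0) :
    (B * Bᵀ).det =
      ∑ k ∈ Finset.range (v + 1), ∏ i : Fin v, if (i : ℕ) < k then a i ^ 2 else δ i ^ 2 := by
  obtain ⟨a, rfl⟩ := Fin.val_injective.surjective_comp_right a
  obtain ⟨δ, rfl⟩ := Fin.val_injective.surjective_comp_right δ
  obtain rfl : B = bidiagonal v m a δ := Matrix.ext hB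
  simp only [det_bidiagonal_mul_transpose_bidiagonal hm, Function.comp_apply, sq]

/-- If `B` is the `v×m` coefficient matrix of a chain of type-1 equations
`3x_i ± x_{i+1} = 0`, `i = 1, …, v` (a directed path), then
`det(B·Bᵀ) = (9^{v+1} − 1)/8`. -/
theorem det_gram_type_one_path (v m : ℕ) (hv : 1 ≤ v) (hm : v + 1 ≤ m)
    (δ : Fin v → ℝ) (hδ : ∀ i, δ i = 1 ∨ δ i = -1)
    (B : Matrix (Fin v) (Fin m) ℝ)
    (hB : ∀ (i : Fin v) (j : Fin m),
      B i j = if (j : ℕ) = (i : ℕ) then 3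
        else if (j : ℕ) = (i : ℕ) + 1 then δ i else 0) :
    (B * Bᵀ).det = ((9 : ℝ) ^ (v + 1) - 1) / 8 := by
  have sq_δ (i : Fin v) : δ i ^ 2 = 1 := sq_eq_one_iff.mpr (hδ i)
  rw [det_gram_type_one_path_general v m hm (fun _ => 3) δ B hB]
  simp only [sq_δ, sum_prod_ite_val_lt]
  norm_num [geom_sum_eq]
end

section
/- Let m, t ≥ 1 and let v₁, …, v_t ≥ 1 be integers with v = v₁ + ⋯ + v_t. For each j = 1, …, t let π_j : {1, …, v_j + 1} → {1, …, m} be injective, and suppose the images of π₁, …, π_t are pairwise disjoint. For each j and each 1 ≤ i ≤ v_j let δ_{j,i} ∈ {1, −1}. Let B be the v×m real matrix whose rows are indexed by pairs (j,i) with 1 ≤ j ≤ t and 1 ≤ i ≤ v_j, where row (j,i) has entry 3 in column π_j(i), entry δ_{j,i} in column π_j(i+1), and all other entries 0. Then det(B·Bᵀ) < 11^t · 9^{v−t}. -/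
open Matrix

/-!
The columns of `B` outside the paths vanish, and the others split into blocks, one for each path,
so `det (B * Bᵀ)` is the product of the Gram determinants of the single paths.

For a path of length `n + 1`, the first column of its matrix has only one nonzero entry `a`, and
deleting that column leaves a lower triangular matrix with diagonal `δ`. Hence the Gram matrix is a
Gram matrix of determinant `∏ i, δ i ^ 2 = 1` plus `a ^ 2` in its corner, and expanding along the
first row gives the recursion `D (n + 1) = 1 + a ^ 2 * D n`. So `D n = ∑ i ≤ n, (a ^ 2) ^ i`, which
is below `(a ^ 2 + 2) * (a ^ 2) ^ (n - 1)` as soon as `2 ≤ a ^ 2`; here `a = 3`.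
-/

theorem mul_eq_submatrix_mul_submatrix_of_injective {l m n o R : Type*} [Fintype m] [Fintype o]
    [NonUnitalNonAssocSemiring R] (A : Matrix l m R) (B : Matrix m n R) {f : o → m}
    (hf : f.Injective) (hA : ∀ i, ∀ c ∉ Set.range f, A i c = 0) :
    A * B = A.submatrix id f * B.submatrix f id := by
  ext i k
  simp only [mul_apply, submatrix_apply, id]
  exact (Fintype.sum_of_injective f hf _ _ (fun c hc ↦ by rw [hA i c hc, zero_mul])
    fun _ ↦ rfl).symm

section PathMatrix

variable {R : Type*} [Zero R]

/-- The weighted edge-vertex matrix of the directed path `0 → 1 → ⋯ → n`: the row of the edge from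
`i` to `i + 1` has entry `a i` at its source, `b i` at its target, and `0` elsewhere. -/
def pathMatrix {n : ℕ} (a b : Fin n → R) : Matrix (Fin n) (Fin (n + 1)) R :=
  of fun i c ↦ if c = i.castSucc then a i else if c = i.succ then b i else 0

theorem pathMatrix_zero_right {n : ℕ} (a b : Fin (n + 1) → R) (i : Fin (n + 1)) :
    pathMatrix a b i 0 = if i = 0 then a 0 else 0 := by
  cases i using Fin.cases <;> simp [pathMatrix, Fin.ext_iff]

theorem pathMatrix_succ_succ {n : ℕ} (a b : Fin (n + 1) → R) (i : Fin n) (c : Fin (n + 1)) :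
    pathMatrix a b i.succ c.succ = pathMatrix (Fin.tail a) (Fin.tail b) i c := by
  simp [pathMatrix, Fin.tail, Fin.ext_iff]

end PathMatrix

section CommRing

variable {R : Type*} [CommRing R]

theorem det_add_single_zero_zero {n : ℕ} (A : Matrix (Fin (n + 1)) (Fin (n + 1)) R) (c : R) :
    (A + single 0 0 c).det = A.det + c * (A.submatrix Fin.succ Fin.succ).det := by
  have minor_eq (j : Fin (n + 1)) : (A + single 0 0 c).submatrix Fin.succ j.succAbove =
      A.submatrix Fin.succ j.succAbove := by
    ext i k
    simp [(Fin.succ_ne_zero i).symm]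
  simp only [det_succ_row_zero (A + single 0 0 c), det_succ_row_zero A, minor_eq, Matrix.add_apply,
    mul_add, add_mul, Finset.sum_add_distrib]
  congr 1
  simp [single_apply]

theorem det_blockDiagonal'_s10 {o : Type*} [Fintype o] [DecidableEq o] {n : o → Type*}
    [∀ k, Fintype (n k)] [∀ k, DecidableEq (n k)] (M : ∀ k, Matrix (n k) (n k) R) :
    (blockDiagonal' M).det = ∏ k, (M k).det := by
  let : LinearOrder o := LinearOrder.lift' (Fintype.equivFin o) (Fintype.equivFin o).injective
  rw [(blockTriangular_blockDiagonal' M).det_fintype]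
  refine Finset.prod_congr rfl fun k _ ↦ ?_
  rw [← det_submatrix_equiv_self (Equiv.sigmaSubtype k).symm]
  congr 1
  ext i j
  exact blockDiagonal'_apply_eq M k i j

theorem det_pathMatrix_submatrix_succ {n : ℕ} (a b : Fin n → R) :
    ((pathMatrix a b).submatrix id Fin.succ).det = ∏ i, b i := by
  rw [det_of_isLowerTriangular]
  · simp [pathMatrix, Fin.ext_iff]
  · intro i j hij
    have : (i : ℕ) < j := hij
    simp only [pathMatrix, submatrix_apply, of_apply, Fin.ext_iff, id, Fin.val_succ,
      Fin.val_castSucc]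
    rw [if_neg (by omega), if_neg (by omega)]

theorem gram_pathMatrix_eq_add_single {n : ℕ} (a b : Fin (n + 1) → R) :
    pathMatrix a b * (pathMatrix a b)ᵀ =
      (pathMatrix a b).submatrix id Fin.succ * ((pathMatrix a b).submatrix id Fin.succ)ᵀ +
        single 0 0 (a 0 ^ 2) := by
  ext i j
  rw [Matrix.add_apply, mul_apply, Fin.sum_univ_succ, add_comm]
  congr 1
  rw [transpose_apply, pathMatrix_zero_right, pathMatrix_zero_right, single_apply]
  split_ifs <;> grind

theorem det_gram_pathMatrix_succ {n : ℕ} (a b : Fin (n + 1) → R) :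
    (pathMatrix a b * (pathMatrix a b)ᵀ).det = (∏ i, b i ^ 2) + a 0 ^ 2 *
      (pathMatrix (Fin.tail a) (Fin.tail b) * (pathMatrix (Fin.tail a) (Fin.tail b))ᵀ).det := by
  rw [gram_pathMatrix_eq_add_single, det_add_single_zero_zero, det_mul, det_transpose,
    det_pathMatrix_submatrix_succ, ← sq, Finset.prod_pow]
  congr 3
  ext i j
  simp [mul_apply, pathMatrix_succ_succ]

theorem det_gram_pathMatrix_const {n : ℕ} (a : R) {b : Fin n → R} (hb : ∀ i, b i ^ 2 = 1) :
    (pathMatrix (fun _ ↦ a) b * (pathMatrix (fun _ ↦ a) b)ᵀ).det =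
      ∑ i ∈ Finset.range (n + 1), (a ^ 2) ^ i := by
  induction n with
  | zero => simp
  | succ n ih =>
    have ih_tail := ih (b := Fin.tail b) fun i ↦ hb i.succ
    rw [det_gram_pathMatrix_succ, geom_sum_succ, add_comm]
    simp only [hb, Finset.prod_const_one]
    exact congrArg (a ^ 2 * · + 1) ih_tail

end CommRing

section DisjointPaths

variable {ι κ R : Type*} [Fintype ι] [DecidableEq ι] [Fintype κ] [DecidableEq κ] [CommRing R]

theorem det_gram_disjoint_paths {v : ι → ℕ} {π : ∀ j, Fin (v j + 1) → κ}
    (hπ : ∀ j, (π j).Injective) (hdisj : ∀ j k, j ≠ k → ∀ x y, π j x ≠ π k y)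
    (a b : ∀ j, Fin (v j) → R) (B : Matrix ((j : ι) × Fin (v j)) κ R)
    (hB : ∀ q c, B q c = if c = π q.1 q.2.castSucc then a q.1 q.2
      else if c = π q.1 q.2.succ then b q.1 q.2 else 0) :
    (B * Bᵀ).det = ∏ j, (pathMatrix (a j) (b j) * (pathMatrix (a j) (b j))ᵀ).det := by
  let vertex (p : (j : ι) × Fin (v j + 1)) : κ := π p.1 p.2
  have vertex_injective : vertex.Injective := by
    rintro ⟨j, x⟩ ⟨k, y⟩ hxy
    obtain rfl : j = k := by_contra fun hjk ↦ hdisj j k hjk x y hxy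
    exact congrArg (Sigma.mk j) (hπ j hxy)
  have vanish_off_paths (q) (c) (hc : c ∉ Set.range vertex) : B q c = 0 := by
    rw [hB, if_neg fun h ↦ hc ⟨⟨q.1, q.2.castSucc⟩, h.symm⟩,
      if_neg fun h ↦ hc ⟨⟨q.1, q.2.succ⟩, h.symm⟩]
  have submatrix_eq : B.submatrix id vertex =
      blockDiagonal' fun j ↦ pathMatrix (a j) (b j) := by
    ext ⟨j, i⟩ ⟨k, x⟩
    rw [submatrix_apply, id, hB]
    by_cases hjk : j = k
    · subst hjk
      simp [vertex, pathMatrix, (hπ j).eq_iff]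
    · simp [vertex, blockDiagonal'_apply_ne _ _ _ hjk, hdisj k j (Ne.symm hjk)]
  rw [mul_eq_submatrix_mul_submatrix_of_injective B Bᵀ vertex_injective vanish_off_paths,
    ← transpose_submatrix, submatrix_eq, blockDiagonal'_transpose, ← blockDiagonal'_mul,
    det_blockDiagonal'_s10]

end DisjointPaths

section Ordered

variable {R : Type*} [CommRing R] [LinearOrder R] [IsStrictOrderedRing R]

theorem geom_sum_lt_add_two_mul_pow {x : R} (hx : 2 ≤ x) {n : ℕ} (hn : 1 ≤ n) :
    ∑ i ∈ Finset.range (n + 1), x ^ i < (x + 2) * x ^ (n - 1) := by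
  obtain ⟨k, rfl⟩ := Nat.exists_eq_add_of_le' hn
  rw [Nat.add_sub_cancel]
  refine lt_of_mul_lt_mul_right (a := x - 1) ?_ (by linarith)
  have hk : 0 ≤ (x - 2) * x ^ k := mul_nonneg (by linarith) (pow_nonneg (by linarith) k)
  calc (∑ i ∈ Finset.range (k + 1 + 1), x ^ i) * (x - 1)
      = x ^ (k + 1 + 1) - 1 := geom_sum_mul x _
    _ < x ^ (k + 1 + 1) + (x - 2) * x ^ k := by linarith
    _ = (x + 2) * x ^ k * (x - 1) := by ring

theorem det_gram_type_one_paths_lt_general {ι κ : Type*} [Fintype ι] [DecidableEq ι] [Nonempty ι]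
    [Fintype κ] [DecidableEq κ] {v : ι → ℕ} (hv : ∀ j, 1 ≤ v j) {π : ∀ j, Fin (v j + 1) → κ}
    (hπ : ∀ j, (π j).Injective) (hdisj : ∀ j k, j ≠ k → ∀ x y, π j x ≠ π k y)
    {a : R} (ha : 2 ≤ a ^ 2) {δ : ∀ j, Fin (v j) → R} (hδ : ∀ j i, δ j i ^ 2 = 1)
    (B : Matrix ((j : ι) × Fin (v j)) κ R)
    (hB : ∀ q c, B q c = if c = π q.1 q.2.castSucc then a
      else if c = π q.1 q.2.succ then δ q.1 q.2 else 0) :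
    (B * Bᵀ).det < (a ^ 2 + 2) ^ Fintype.card ι * (a ^ 2) ^ ((∑ j, v j) - Fintype.card ι) := by
  have sum_sub_one : ∑ j, (v j - 1) = (∑ j, v j) - Fintype.card ι := by
    simp [Finset.sum_tsub_distrib Finset.univ fun j _ ↦ hv j]
  have path_sum_pos (j) : 0 < ∑ i ∈ Finset.range (v j + 1), (a ^ 2) ^ i :=
    geom_sum_pos (sq_nonneg a) (Nat.succ_ne_zero _)
  calc (B * Bᵀ).det
      = ∏ j, (pathMatrix (fun _ ↦ a) (δ j) * (pathMatrix (fun _ ↦ a) (δ j))ᵀ).det :=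
        det_gram_disjoint_paths hπ hdisj (fun _ _ ↦ a) δ B hB
    _ = ∏ j, ∑ i ∈ Finset.range (v j + 1), (a ^ 2) ^ i :=
        Finset.prod_congr rfl fun j _ ↦ det_gram_pathMatrix_const a (hδ j)
    _ < ∏ j, (a ^ 2 + 2) * (a ^ 2) ^ (v j - 1) :=
        Finset.prod_lt_prod_of_nonempty (fun j _ ↦ path_sum_pos j)
          (fun j _ ↦ geom_sum_lt_add_two_mul_pow ha (hv j)) Finset.univ_nonempty
    _ = _ := by
        rw [Finset.prod_mul_distrib, Finset.prod_pow_eq_pow_sum, sum_sub_one, Finset.prod_const,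
          Finset.card_univ]

end Ordered

/-- If the rows of `B` are the coefficient vectors of type-1 equations `3x_a ± x_b = 0`
whose associated edges decompose into `t` pairwise vertex-disjoint directed paths of
lengths `v 1, …, v t`, then `det(B·Bᵀ) < 11^t · 9^{v − t}` where `v = v 1 + ⋯ + v t`. -/
theorem det_gram_type_one_paths_lt (m t : ℕ) (hm : 1 ≤ m) (ht : 1 ≤ t)
    (v : Fin t → ℕ) (hv : ∀ j, 1 ≤ v j)
    (π : ∀ j : Fin t, Fin (v j + 1) → Fin m)
    (hπ : ∀ j, Function.Injective (π j))
    (hdisj : ∀ j k, j ≠ k → ∀ (x : Fin (v j + 1)) (y : Fin (v k + 1)), π j x ≠ π k y)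
    (δ : ∀ j : Fin t, Fin (v j) → ℝ)
    (hδ : ∀ j i, δ j i = 1 ∨ δ j i = -1)
    (B : Matrix ((j : Fin t) × Fin (v j)) (Fin m) ℝ)
    (hB : ∀ (q : (j : Fin t) × Fin (v j)) (c : Fin m),
      B q c = if c = π q.1 q.2.castSucc then 3
        else if c = π q.1 q.2.succ then δ q.1 q.2 else 0) :
    (B * Bᵀ).det < (11 : ℝ) ^ t * (9 : ℝ) ^ ((∑ j, v j) - t) := by
  have : NeZero t := ⟨Nat.one_le_iff_ne_zero.mp ht⟩
  simpa [show (3 : ℝ) ^ 2 = 9 by norm_num, show (9 : ℝ) + 2 = 11 by norm_num] using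
    det_gram_type_one_paths_lt_general hv hπ hdisj (a := 3) (by norm_num)
      (fun j i ↦ sq_eq_one_iff.mpr (hδ j i)) B hB
end
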